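/- (Monotonicity in time of the potential.) Let d > 2s and let ρ be an admissible weight with exponents (γ₀,γ). Let u be a weak solution of the Cauchy problem ρ u_t + (-Δ)^s(u^m) = 0 with initial datum the positive finite Radon measure μ, and define the potential U(x,t) := k ∫_{ℝ^d} |x-y|^{2s-d} u(y,t) ρ(y) dy ∈ [0,∞]. Then U is essentially nonincreasing in time: for almost every pair (t₁,t₂) with 0 < t₁ ≤ t₂, one has U(x,t₂) ≤ U(x,t₁) for a.e. x ∈ ℝ^d. -/

import Mathlib

open MeasureTheory Filter Topology Set
open scoped ENNReal NNReal

noncomputable section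

/-- `d`-dimensional Euclidean space. -/
abbrev Ed (d : ℕ) : Type := EuclideanSpace ℝ (Fin d)

/-- An admissible weight with exponents `(γ₀, γ)` and constants `0 < c < C`:
a measurable, everywhere positive function comparable to `|x|^{-γ₀}` near the
origin and to `|x|^{-γ}` at infinity. -/
def AdmissibleWeight (d : ℕ) (ρ : Ed d → ℝ) (γ₀ γ c C : ℝ) : Prop :=
  0 < c ∧ c < C ∧ Measurable ρ ∧ (∀ x, 0 < ρ x) ∧
    (∀ᵐ x ∂(volume : Measure (Ed d)), ‖x‖ ≤ 1 →
      c * ‖x‖ ^ (-γ₀) ≤ ρ x ∧ ρ x ≤ C * ‖x‖ ^ (-γ₀)) ∧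
    (∀ᵐ x ∂(volume : Measure (Ed d)), 1 < ‖x‖ →
      c * ‖x‖ ^ (-γ) ≤ ρ x ∧ ρ x ≤ C * ‖x‖ ^ (-γ))

/-- The Gagliardo bilinear form `E(v,w)` of order `s` with normalizing constant `κ`. -/
def gagliardoE (d : ℕ) (s κ : ℝ) (v w : Ed d → ℝ) : ℝ :=
  (κ / 2) * ∫ p : Ed d × Ed d,
    (v p.1 - v p.2) * (w p.1 - w p.2) / ‖p.1 - p.2‖ ^ ((d : ℝ) + 2 * s)

/-- The squared homogeneous fractional Sobolev seminorm `‖v‖_{Ḣ^s}² = E(v,v)`,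
with values in `[0,∞]`. -/
def gagliardoSq (d : ℕ) (s κ : ℝ) (v : Ed d → ℝ) : ℝ≥0∞ :=
  ENNReal.ofReal (κ / 2) * ∫⁻ p : Ed d × Ed d,
    ENNReal.ofReal ((v p.1 - v p.2) ^ 2 / ‖p.1 - p.2‖ ^ ((d : ℝ) + 2 * s))

/-- The weighted `L^p` norm `‖v‖_{p,ρ}`, valued in `[0,∞]`. -/
def wnorm (d : ℕ) (p : ℝ) (ρ v : Ed d → ℝ) : ℝ≥0∞ :=
  (∫⁻ x : Ed d, ENNReal.ofReal (|v x| ^ p * ρ x)) ^ (1 / p)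

/-- Smooth compactly supported test functions on `ℝ^d × (0,∞)`. -/
def IsTestFn (d : ℕ) (φ : Ed d × ℝ → ℝ) : Prop :=
  ContDiff ℝ (⊤ : ℕ∞) φ ∧ HasCompactSupport φ ∧ tsupport φ ⊆ univ ×ˢ Ioi (0 : ℝ)

/-- Conditions (i)–(iii) of the definition of weak solution of
`ρ u_t + (-Δ)^s(u^m) = 0` on `ℝ^d × (0,∞)` (no initial datum prescribed). -/
structure WeakSolCore (d : ℕ) (s m κ : ℝ) (ρ : Ed d → ℝ) (u : Ed d → ℝ → ℝ) : Prop where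
  measurable : Measurable (Function.uncurry u)
  nonneg : ∀ x t, 0 ≤ u x t
  /-- (i), first part: `ess sup_{t>0} ∫ u(·,t) ρ < ∞`. -/
  massBound : ∃ M : ℝ, ∀ᵐ t ∂(volume.restrict (Ioi (0 : ℝ))),
    Integrable (fun x : Ed d => u x t * ρ x) ∧ (∫ x : Ed d, u x t * ρ x) ≤ M
  /-- (i), second part: `u` essentially bounded on `ℝ^d × (τ,∞)` for every `τ > 0`. -/
  essBdd : ∀ τ : ℝ, 0 < τ → ∃ B : ℝ,
    ∀ᵐ p ∂(volume : Measure (Ed d × ℝ)), τ < p.2 → u p.1 p.2 ≤ B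
  /-- (ii), first part: `‖u^m(·,t)‖_{Ḣ^s} < ∞` for a.e. `t > 0`. -/
  energyFinite : ∀ᵐ t ∂(volume.restrict (Ioi (0 : ℝ))),
    gagliardoSq d s κ (fun x => u x t ^ m) < ⊤
  /-- (ii), second part: `t ↦ ‖u^m(·,t)‖_{Ḣ^s}²` locally integrable on `(0,∞)`. -/
  energyLocInt : ∀ t₁ t₂ : ℝ, 0 < t₁ → t₁ < t₂ →
    (∫⁻ t in Ioc t₁ t₂, gagliardoSq d s κ (fun x => u x t ^ m)) ≠ ⊤
  /-- (iii): the weak formulation against all test functions. -/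
  weakForm : ∀ φ : Ed d × ℝ → ℝ, IsTestFn d φ →
    -(∫ t in Ioi (0 : ℝ), ∫ x : Ed d, u x t * deriv (fun τ => φ (x, τ)) t * ρ x)
      + ∫ t in Ioi (0 : ℝ),
          gagliardoE d s κ (fun x => u x t ^ m) (fun x => φ (x, t)) = 0

/-- Condition (iv): `ρ(·)u(·,t) → μ` as `t → 0` essentially, tested against all
bounded continuous functions. -/
def HasInitialTrace (d : ℕ) (ρ : Ed d → ℝ) (u : Ed d → ℝ → ℝ)
    (μ : Measure (Ed d)) : Prop :=
  ∃ N : Set ℝ, volume N = 0 ∧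
    ∀ φ : Ed d → ℝ, Continuous φ → (∃ B : ℝ, ∀ x, |φ x| ≤ B) →
      Tendsto (fun t => ∫ x : Ed d, φ x * (u x t * ρ x))
        (𝓝[(Ioi (0 : ℝ)) \ N] 0) (𝓝 (∫ x, φ x ∂μ))

/-- Weak solution of the Cauchy problem with initial datum `μ`. -/
def IsWeakSolution (d : ℕ) (s m κ : ℝ) (ρ : Ed d → ℝ) (μ : Measure (Ed d))
    (u : Ed d → ℝ → ℝ) : Prop :=
  WeakSolCore d s m κ ρ u ∧ HasInitialTrace d ρ u μ

/-- The Riesz potential (of order `2s`, constant `k`) of `ρ(·)u(·,t)`, valued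
in `[0,∞]`. -/
def rieszPotU (d : ℕ) (s k : ℝ) (ρ : Ed d → ℝ) (u : Ed d → ℝ → ℝ)
    (x : Ed d) (t : ℝ) : ℝ≥0∞ :=
  ENNReal.ofReal k *
    ∫⁻ y : Ed d, (ENNReal.ofReal ‖x - y‖) ^ (2 * s - (d : ℝ)) *
      ENNReal.ofReal (u y t * ρ y)

/-- The Riesz potential (of order `2s`, constant `k`) of a measure `μ`. -/
def rieszPotMeas (d : ℕ) (s k : ℝ) (μ : Measure (Ed d)) (x : Ed d) : ℝ≥0∞ :=
  ENNReal.ofReal k *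
    ∫⁻ y, (ENNReal.ofReal ‖x - y‖) ^ (2 * s - (d : ℝ)) ∂μ

/-- The singular kernel `|z|^{-(d+2s)}`. -/
def fracKer (d : ℕ) (s : ℝ) (z : Ed d) : ℝ := ‖z‖ ^ (-((d : ℝ) + 2 * s))

/-- The symmetric second difference of `f` at `x` with increment `z`. -/
def secDiff {d : ℕ} (f : Ed d → ℝ) (x z : Ed d) : ℝ := 2 * f x - f (x + z) - f (x - z)

/-- The fractional Laplacian (up to a positive constant) in second-difference form. -/
def fracLap (d : ℕ) (s : ℝ) (f : Ed d → ℝ) (x : Ed d) : ℝ :=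
  ∫ z, fracKer d s z * secDiff f x z

/-- The dilation of `f` preserving the Riesz kernel. -/
def rieszDil (d : ℕ) (s r : ℝ) (f : Ed d → ℝ) (x : Ed d) : ℝ :=
  r ^ (2 * s - (d : ℝ)) * f (r⁻¹ • x)

/-- The (unnormalized) Riesz kernel. -/
def rieszKer (d : ℕ) (s : ℝ) (x : Ed d) : ℝ := ‖x‖ ^ (2 * s - (d : ℝ))

theorem nontrivial_Ed {d : ℕ} (hd : 0 < d) : Nontrivial (Ed d) := by
  have : Nonempty (Fin d) := ⟨⟨0, hd⟩⟩
  infer_instance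

theorem measurable_fracKer (d : ℕ) (s : ℝ) : Measurable (fracKer d s) := by
  unfold fracKer; fun_prop

theorem measurable_rieszKer (d : ℕ) (s : ℝ) : Measurable (rieszKer d s) := by
  unfold rieszKer; fun_prop

theorem fracKer_nonneg (d : ℕ) (s : ℝ) (z : Ed d) : 0 ≤ fracKer d s z := by
  unfold fracKer; positivity

theorem rieszKer_nonneg (d : ℕ) (s : ℝ) (z : Ed d) : 0 ≤ rieszKer d s z := by
  unfold rieszKer; positivity

theorem integrable_fracKer_mul_min {d : ℕ} {s : ℝ} (hd : 0 < d) (hs0 : 0 < s) (hs1 : s < 1) :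
    Integrable (fun z : Ed d => fracKer d s z * min 1 (‖z‖ ^ 2)) := by
  have := nontrivial_Ed hd
  have hd1 : ((d - 1 : ℕ) : ℝ) = (d : ℝ) - 1 := by
    rw [Nat.cast_sub (by omega)]; simp
  refine (integrable_fun_norm_addHaar (E := Ed d) volume
    (f := fun y : ℝ => y ^ (-((d : ℝ) + 2 * s)) * min 1 (y ^ 2))).2 ?_
  rw [finrank_euclideanSpace_fin, ← Ioc_union_Ioi_eq_Ioi (zero_le_one' ℝ)]
  refine IntegrableOn.union ?_ ?_
  · have h1 : IntegrableOn (fun y : ℝ => y ^ (1 - 2 * s)) (Ioc 0 1) := by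
      rw [← intervalIntegrable_iff_integrableOn_Ioc_of_le zero_le_one]
      exact intervalIntegral.intervalIntegrable_rpow' (by linarith)
    refine h1.congr_fun (fun y hy => ?_) measurableSet_Ioc
    have hy0 : 0 < y := hy.1
    have : y ^ 2 ≤ 1 := pow_le_one₀ hy0.le hy.2
    simp only [smul_eq_mul, min_eq_right this]
    rw [← Real.rpow_natCast, ← Real.rpow_natCast, ← Real.rpow_add hy0, ← Real.rpow_add hy0, hd1]
    congr 1; push_cast; ring
  · have h1 : IntegrableOn (fun y : ℝ => y ^ (-1 - 2 * s)) (Ioi 1) :=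
      integrableOn_Ioi_rpow_of_lt (by linarith) one_pos
    refine h1.congr_fun (fun y hy => ?_) measurableSet_Ioi
    have hy1 : 1 < y := hy
    have hy0 : 0 < y := by linarith
    have : 1 ≤ y ^ 2 := one_le_pow₀ hy1.le
    simp only [smul_eq_mul, min_eq_left this, mul_one]
    rw [← Real.rpow_natCast, ← Real.rpow_add hy0, hd1]
    congr 1; ring

theorem integrableOn_rieszKer {d : ℕ} {s : ℝ} (hd : 0 < d) (hs0 : 0 < s) (r : ℝ) :
    IntegrableOn (rieszKer d s) (Metric.closedBall 0 r) := by
  have := nontrivial_Ed hd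
  have hd1 : ((d - 1 : ℕ) : ℝ) = (d : ℝ) - 1 := by
    rw [Nat.cast_sub (by omega)]; simp
  have key : Integrable (fun x : Ed d =>
      (Iic (|r| + 1)).indicator (fun y : ℝ => y ^ (2 * s - (d : ℝ))) ‖x‖) := by
    refine (integrable_fun_norm_addHaar (E := Ed d) volume
      (f := (Iic (|r| + 1)).indicator (fun y : ℝ => y ^ (2 * s - (d : ℝ))))).2 ?_
    rw [finrank_euclideanSpace_fin]
    have h1 : IntegrableOn (fun y : ℝ => y ^ (2 * s - 1)) (Ioc 0 (|r| + 1)) := by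
      rw [← intervalIntegrable_iff_integrableOn_Ioc_of_le (by positivity)]
      exact intervalIntegral.intervalIntegrable_rpow' (by linarith)
    have h2 : IntegrableOn ((Iic (|r| + 1)).indicator (fun y : ℝ => y ^ (2 * s - 1))) (Ioi 0) := by
      rw [IntegrableOn, integrable_indicator_iff measurableSet_Iic, IntegrableOn,
        Measure.restrict_restrict measurableSet_Iic]
      rwa [show Iic (|r| + 1) ∩ Ioi 0 = Ioc 0 (|r| + 1) by ext y; simp [and_comm]]
    refine h2.congr_fun (fun y hy => ?_) measurableSet_Ioi
    have hy0 : 0 < y := hy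
    by_cases hyr : y ∈ Iic (|r| + 1)
    · simp only [indicator_of_mem hyr, smul_eq_mul]
      rw [← Real.rpow_natCast, ← Real.rpow_add hy0, hd1]
      congr 1; ring
    · simp [indicator_of_notMem hyr]
  refine (key.integrableOn (s := Metric.closedBall 0 r)).congr_fun (fun x hx => ?_)
    Metric.isClosed_closedBall.measurableSet
  have : ‖x‖ ≤ r := by simpa using hx
  have h3 : ‖x‖ ∈ Iic (|r| + 1) := by
    simp only [mem_Iic]; linarith [le_abs_self r]
  simp only [indicator_of_mem h3, rieszKer]

theorem fracKer_smul {d : ℕ} {s r : ℝ} (hr : 0 < r) (z : Ed d) :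
    fracKer d s (r • z) = r ^ (-((d : ℝ) + 2 * s)) * fracKer d s z := by
  unfold fracKer
  rw [norm_smul, Real.norm_of_nonneg hr.le, Real.mul_rpow hr.le (norm_nonneg _)]

theorem rieszKer_smul {d : ℕ} {s r : ℝ} (hr : 0 < r) (z : Ed d) :
    rieszKer d s (r • z) = r ^ (2 * s - (d : ℝ)) * rieszKer d s z := by
  unfold rieszKer
  rw [norm_smul, Real.norm_of_nonneg hr.le, Real.mul_rpow hr.le (norm_nonneg _)]

theorem secDiff_rieszDil {d : ℕ} {s r : ℝ} (f : Ed d → ℝ) (x z : Ed d) :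
    secDiff (rieszDil d s r f) x z = r ^ (2 * s - (d : ℝ)) * secDiff f (r⁻¹ • x) (r⁻¹ • z) := by
  simp only [secDiff, rieszDil, smul_add, smul_sub]; ring

theorem fracLap_rieszDil {d : ℕ} {s r : ℝ} (hr : 0 < r) (f : Ed d → ℝ) (x : Ed d) :
    fracLap d s (rieszDil d s r f) x = r ^ (-(d : ℝ)) * fracLap d s f (r⁻¹ • x) := by
  have h := Measure.integral_comp_smul (volume : Measure (Ed d))
    (fun z => fracKer d s z * secDiff (rieszDil d s r f) x z) r
  have h2 : ∀ z : Ed d, fracKer d s (r • z) * secDiff (rieszDil d s r f) x (r • z)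
      = r ^ (-2 * (d : ℝ)) * (fracKer d s z * secDiff f (r⁻¹ • x) z) := by
    intro z
    rw [fracKer_smul hr, secDiff_rieszDil, inv_smul_smul₀ hr.ne']
    have : r ^ (-2 * (d : ℝ)) = r ^ (-((d : ℝ) + 2 * s)) * r ^ (2 * s - (d : ℝ)) := by
      rw [← Real.rpow_add hr]; congr 1; ring
    rw [this]; ring
  simp_rw [h2, integral_const_mul, finrank_euclideanSpace_fin] at h
  rw [abs_of_pos (by positivity), smul_eq_mul] at h
  unfold fracLap
  have h3 : r ^ (-2 * (d : ℝ)) = r ^ (-(d : ℝ)) * (r ^ d)⁻¹ := by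
    rw [← Real.rpow_natCast, ← Real.rpow_neg hr.le, ← Real.rpow_add hr]; congr 1; ring
  rw [h3] at h
  have h4 : (r ^ d)⁻¹ ≠ 0 := by positivity
  apply mul_left_cancel₀ h4
  rw [← h]; ring

theorem rieszDil_rieszKer {d : ℕ} {s r : ℝ} (hr : 0 < r) :
    rieszDil d s r (rieszKer d s) = rieszKer d s := by
  funext x
  rw [rieszDil, ← rieszKer_smul hr, smul_inv_smul₀ hr.ne']

theorem fracLap_rieszKer_eq {d : ℕ} {s : ℝ} {x e : Ed d} (hx : x ≠ 0) (he : ‖e‖ = 1) :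
    fracLap d s (rieszKer d s) x = fracLap d s (rieszKer d s) e * ‖x‖ ^ (-(d : ℝ)) := by
  have hx0 : 0 < ‖x‖ := norm_pos_iff.2 hx
  have h1 := fracLap_rieszDil (s := s) hx0 (rieszKer d s) x
  rw [rieszDil_rieszKer hx0] at h1
  rw [h1, mul_comm]
  congr 1
  set y : Ed d := ‖x‖⁻¹ • x with hy
  have hyn : ‖e‖ = ‖y‖ := by
    rw [he, hy, norm_smul, norm_inv, norm_norm, inv_mul_cancel₀ hx0.ne']
  set f := (ℝ ∙ (e - y))ᗮ.reflection with hf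
  have hfe : f e = y := Submodule.reflection_sub hyn
  rw [← hfe]
  unfold fracLap
  rw [← f.measurePreserving.integral_comp f.toHomeomorph.measurableEmbedding]
  refine integral_congr_ae (Eventually.of_forall fun z => ?_)
  simp only [secDiff, fracKer, rieszKer, ← map_add, ← map_sub, LinearIsometryEquiv.norm_map]

theorem abs_secDiff_le_of_abs_le {d : ℕ} {f : Ed d → ℝ} {A : ℝ} (hA : ∀ x, |f x| ≤ A)
    (x z : Ed d) : |secDiff f x z| ≤ 4 * A := by
  have h1 := abs_le.1 (hA x)
  have h2 := abs_le.1 (hA (x + z))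
  have h3 := abs_le.1 (hA (x - z))
  unfold secDiff
  rw [abs_le]; constructor <;> linarith [h1.1, h1.2, h2.1, h2.2, h3.1, h3.2]

theorem abs_secDiff_le_min {d : ℕ} {f : Ed d → ℝ} {A C : ℝ} (hA : ∀ x, |f x| ≤ A)
    (hC : ∀ x z, |secDiff f x z| ≤ C * ‖z‖ ^ 2) (x z : Ed d) :
    |secDiff f x z| ≤ max (4 * A) C * min 1 (‖z‖ ^ 2) := by
  rcases le_total 1 (‖z‖ ^ 2) with h | h
  · rw [min_eq_left h, mul_one]
    exact (abs_secDiff_le_of_abs_le hA x z).trans (le_max_left _ _)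
  · rw [min_eq_right h]
    exact (hC x z).trans (by gcongr; exact le_max_right _ _)

theorem integrable_fracKer_mul_secDiff {d : ℕ} {s : ℝ} (hd : 0 < d) (hs0 : 0 < s) (hs1 : s < 1)
    {f : Ed d → ℝ} (hf : Continuous f) {A C : ℝ} (hA : ∀ x, |f x| ≤ A)
    (hC : ∀ x z, |secDiff f x z| ≤ C * ‖z‖ ^ 2) (x : Ed d) :
    Integrable (fun z => fracKer d s z * secDiff f x z) := by
  refine ((integrable_fracKer_mul_min hd hs0 hs1).const_mul (max (4 * A) C)).mono' ?_ ?_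
  · refine ((measurable_fracKer d s).mul ?_).aestronglyMeasurable
    unfold secDiff; fun_prop
  · refine Eventually.of_forall fun z => ?_
    rw [norm_mul, Real.norm_of_nonneg (fracKer_nonneg d s z), Real.norm_eq_abs]
    calc fracKer d s z * |secDiff f x z|
        ≤ fracKer d s z * (max (4 * A) C * min 1 (‖z‖ ^ 2)) := by
          gcongr
          · exact fracKer_nonneg d s z
          · exact abs_secDiff_le_min hA hC x z
      _ = _ := by ring

theorem exists_abs_fracLap_le {d : ℕ} {s : ℝ} (hd : 0 < d) (hs0 : 0 < s) (hs1 : s < 1)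
    {f : Ed d → ℝ} {A C : ℝ} (hA : ∀ x, |f x| ≤ A)
    (hC : ∀ x z, |secDiff f x z| ≤ C * ‖z‖ ^ 2) : ∃ M : ℝ, ∀ x, |fracLap d s f x| ≤ M := by
  refine ⟨∫ z, max (4 * A) C * (fracKer d s z * min 1 (‖z‖ ^ 2)), fun x => ?_⟩
  refine norm_integral_le_of_norm_le (f := fun z => fracKer d s z * secDiff f x z)
    ((integrable_fracKer_mul_min hd hs0 hs1).const_mul (max (4 * A) C))
    (Eventually.of_forall fun z => ?_)
  rw [norm_mul, Real.norm_of_nonneg (fracKer_nonneg d s z), Real.norm_eq_abs]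
  calc fracKer d s z * |secDiff f x z|
      ≤ fracKer d s z * (max (4 * A) C * min 1 (‖z‖ ^ 2)) := by
        gcongr
        · exact fracKer_nonneg d s z
        · exact abs_secDiff_le_min hA hC x z
    _ = _ := by ring

theorem exists_abs_secDiff_le_sq {d : ℕ} {f : Ed d → ℝ} (hf : ContDiff ℝ (⊤ : ℕ∞) f)
    (hc : HasCompactSupport f) : ∃ C : ℝ, ∀ x z, |secDiff f x z| ≤ C * ‖z‖ ^ 2 := by
  have hf2 : ContDiff ℝ 2 f := contDiff_infty.1 hf 2
  have hdf : Differentiable ℝ f := hf2.differentiable (by norm_num)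
  obtain ⟨C, hC⟩ := ContDiff.lipschitzWith_of_hasCompactSupport (hc.fderiv (𝕜 := ℝ))
    (hf2.fderiv_right (m := 1) (by norm_num)) (by norm_num)
  refine ⟨C, fun x z => ?_⟩
  have hq : ∀ y, HasFDerivAt (fun y => f (y + z) - f y) (fderiv ℝ f (y + z) - fderiv ℝ f y) y := by
    intro y
    exact ((hasFDerivAt_comp_add_right z).2 (hdf (y + z)).hasFDerivAt).sub (hdf y).hasFDerivAt
  have hmv := (convex_univ (𝕜 := ℝ) (E := Ed d)).norm_image_sub_le_of_norm_hasFDerivWithin_le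
    (C := C * ‖z‖) (f := fun y => f (y + z) - f y) (x := x) (y := x - z)
    (fun y _ => (hq y).hasFDerivWithinAt)
    (fun y _ => by
      have := hC.norm_sub_le (y + z) y
      simpa using this) (mem_univ _) (mem_univ _)
  simp only [sub_add_cancel, Real.norm_eq_abs, sub_sub_cancel_left, norm_neg] at hmv
  have : secDiff f x z = f x - f (x - z) - (f (x + z) - f x) := by unfold secDiff; ring
  rw [this]
  calc _ ≤ (C : ℝ) * ‖z‖ * ‖z‖ := hmv
    _ = _ := by ring

theorem exists_abs_le_of_hasCompactSupport {d : ℕ} {f : Ed d → ℝ} (hf : Continuous f)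
    (hc : HasCompactSupport f) : ∃ A : ℝ, ∀ x, |f x| ≤ A := by
  obtain ⟨A, hA⟩ := hc.exists_bound_of_continuous hf
  exact ⟨A, hA⟩

theorem integrable_fracKer_mul_secDiff_prod {d : ℕ} {s : ℝ} (hd : 0 < d) (hs0 : 0 < s)
    (hs1 : s < 1) {f : Ed d → ℝ} (hf : ContDiff ℝ (⊤ : ℕ∞) f) (hc : HasCompactSupport f) :
    Integrable (fun p : Ed d × Ed d => fracKer d s p.2 * secDiff f p.1 p.2)
      (volume.prod volume) := by
  obtain ⟨A, hA⟩ := exists_abs_le_of_hasCompactSupport hf.continuous hc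
  obtain ⟨C, hC⟩ := exists_abs_secDiff_le_sq hf hc
  have hfc := hf.continuous
  have hb := abs_secDiff_le_min hA hC
  set M := max (4 * A) C
  have hM : 0 ≤ M := le_max_of_le_left (by linarith [(abs_nonneg _).trans (hA 0)])
  set χ : Ed d → ℝ := (tsupport f).indicator 1 with hχ
  have hχ0 : ∀ x, 0 ≤ χ x := fun x => indicator_nonneg (by simp) x
  have hχm : Measurable χ := measurable_one.indicator (isClosed_tsupport f).measurableSet
  have hχi : Integrable χ := by
    refine (integrable_indicator_iff (isClosed_tsupport f).measurableSet).2 ?_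
    exact integrableOn_const (C := (1 : ℝ)) hc.isCompact.measure_lt_top.ne
  have hχ1 : ∀ x, f x ≠ 0 → χ x = 1 := fun x hx =>
    indicator_of_mem (subset_tsupport f hx) _
  set g : Ed d → ℝ := fun z => fracKer d s z * min 1 (‖z‖ ^ 2)
  have hg0 : ∀ z, 0 ≤ g z := fun z => mul_nonneg (fracKer_nonneg d s z) (by positivity)
  have hgi : Integrable g := integrable_fracKer_mul_min hd hs0 hs1
  have base : Integrable (fun p : Ed d × Ed d => χ p.1 * g p.2) (volume.prod volume) :=
    hχi.mul_prod hgi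
  have hp : Integrable (fun p : Ed d × Ed d => χ (p.1 + p.2) * g p.2) (volume.prod volume) :=
    (measurePreserving_add_prod (volume : Measure (Ed d)) volume).integrable_comp_of_integrable base
  have hm : Integrable (fun p : Ed d × Ed d => χ (p.1 - p.2) * g p.2) (volume.prod volume) :=
    (measurePreserving_sub_prod (volume : Measure (Ed d)) volume).integrable_comp_of_integrable base
  refine (((base.add hp).add hm).const_mul M).mono' ?_ ?_
  · refine Measurable.aestronglyMeasurable ?_
    refine ((measurable_fracKer d s).comp measurable_snd).mul ?_
    unfold secDiff; fun_prop
  · refine Eventually.of_forall fun p => ?_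
    obtain ⟨x, z⟩ := p
    simp only [Pi.add_apply, norm_mul, Real.norm_of_nonneg (fracKer_nonneg d s z),
      Real.norm_eq_abs]
    by_cases h : f x = 0 ∧ f (x + z) = 0 ∧ f (x - z) = 0
    · have : secDiff f x z = 0 := by simp [secDiff, h.1, h.2.1, h.2.2]
      rw [this, abs_zero, mul_zero]
      have := hχ0 x; have := hχ0 (x + z); have := hχ0 (x - z); have := hg0 z
      positivity
    · have h1 : 1 ≤ χ x + χ (x + z) + χ (x - z) := by
        have := hχ0 x; have := hχ0 (x + z); have := hχ0 (x - z)
        by_cases h1 : f x = 0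
        · by_cases h2 : f (x + z) = 0
          · have h3 : f (x - z) ≠ 0 := fun h3 => h ⟨h1, h2, h3⟩
            linarith [hχ1 _ h3]
          · linarith [hχ1 _ h2]
        · linarith [hχ1 _ h1]
      calc fracKer d s z * |secDiff f x z|
          ≤ fracKer d s z * (M * min 1 (‖z‖ ^ 2)) := by
            gcongr
            · exact fracKer_nonneg d s z
            · exact hb x z
        _ = M * g z * 1 := by simp only [g]; ring
        _ ≤ M * g z * (χ x + χ (x + z) + χ (x - z)) := by
            gcongr
            exact mul_nonneg hM (hg0 z)
        _ = _ := by ring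

theorem integral_secDiff_eq_zero {d : ℕ} {f : Ed d → ℝ} (hf : Integrable f) (z : Ed d) :
    ∫ x, secDiff f x z = 0 := by
  have h : Integrable fun x => 2 * f x - f (x + z) := (hf.const_mul 2).sub (hf.comp_add_right z)
  unfold secDiff
  rw [integral_sub h (hf.comp_sub_right z), integral_sub (hf.const_mul 2) (hf.comp_add_right z), integral_const_mul,
    integral_add_right_eq_self f z, integral_sub_right_eq_self f z]
  ring

theorem integrable_fracLap {d : ℕ} {s : ℝ} (hd : 0 < d) (hs0 : 0 < s)
    (hs1 : s < 1) {f : Ed d → ℝ} (hf : ContDiff ℝ (⊤ : ℕ∞) f) (hc : HasCompactSupport f) :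
    Integrable (fracLap d s f) :=
  (integrable_fracKer_mul_secDiff_prod hd hs0 hs1 hf hc).integral_prod_left

theorem integral_fracLap_eq_zero {d : ℕ} {s : ℝ} (hd : 0 < d) (hs0 : 0 < s)
    (hs1 : s < 1) {f : Ed d → ℝ} (hf : ContDiff ℝ (⊤ : ℕ∞) f) (hc : HasCompactSupport f) :
    ∫ x, fracLap d s f x = 0 := by
  have hfi : Integrable f := hf.continuous.integrable_of_hasCompactSupport hc
  unfold fracLap
  rw [integral_integral_swap (integrable_fracKer_mul_secDiff_prod hd hs0 hs1 hf hc)]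
  simp_rw [integral_const_mul, integral_secDiff_eq_zero hfi]
  simp

theorem integral_mul_second_difference {d : ℕ} {v f : Ed d → ℝ} (hv : AEStronglyMeasurable v)
    {B : ℝ} (hB : ∀ᵐ x, |v x| ≤ B) (hf : Integrable f) (z : Ed d) :
    ∫ x, (v x - v (x + z)) * (f x - f (x + z)) = ∫ x, v x * secDiff f x z := by
  have hvb : ∀ g : Ed d → ℝ, Integrable g → Integrable (fun x => v x * g x) := fun g hg =>
    hg.bdd_mul hv (c := B) hB
  have h1 : Integrable (fun x => v x * (f x - f (x + z))) := hvb _ (hf.sub (hf.comp_add_right z))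
  have h2 : Integrable (fun x => v x * (f (x - z) - f x)) := hvb _ ((hf.comp_sub_right z).sub hf)
  have h3 : Integrable (fun x => v (x + z) * (f x - f (x + z))) := by
    simpa using h2.comp_add_right z
  have h4 : ∫ x, v (x + z) * (f x - f (x + z)) = ∫ x, v x * (f (x - z) - f x) := by
    rw [← integral_add_right_eq_self (fun x => v x * (f (x - z) - f x)) z]
    simp
  simp_rw [sub_mul]
  rw [integral_sub h1 h3, h4, ← integral_sub h1 h2]
  congr 1; ext x; unfold secDiff; ring

/-- The Gagliardo form against a smooth compactly supported function bounds from below the pairing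
with its fractional Laplacian; the integrability of the Gagliardo integrand is not required since
a divergent Bochner integral vanishes. -/
theorem gagliardoE_ge_of_fracLap_ge {d : ℕ} {s κ : ℝ} (hd : 0 < d) (hs0 : 0 < s)
    (hs1 : s < 1) (hκ : 0 < κ) {v f w : Ed d → ℝ} (hv : Measurable v) (hv0 : ∀ x, 0 ≤ v x)
    {B : ℝ} (hB : ∀ᵐ x, v x ≤ B) (hf : ContDiff ℝ (⊤ : ℕ∞) f) (hc : HasCompactSupport f)
    (hw0 : ∀ x, 0 ≤ w x) (hvw : Integrable (fun x => v x * w x))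
    (hfw : ∀ x, -w x ≤ fracLap d s f x) :
    -(κ / 2 * ∫ x, v x * w x) ≤ gagliardoE d s κ v f := by
  have hfi : Integrable f := hf.continuous.integrable_of_hasCompactSupport hc
  have hw : 0 ≤ ∫ x, v x * w x := integral_nonneg fun x => mul_nonneg (hv0 x) (hw0 x)
  have hBv : ∀ᵐ x, |v x| ≤ B := by
    filter_upwards [hB] with x hx
    rwa [abs_of_nonneg (hv0 x)]
  unfold gagliardoE
  rw [← mul_neg]
  refine mul_le_mul_of_nonneg_left ?_ (by positivity)
  by_cases hi : Integrable (fun p : Ed d × Ed d =>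
      (v p.1 - v p.2) * (f p.1 - f p.2) / ‖p.1 - p.2‖ ^ ((d : ℝ) + 2 * s))
  swap
  · rw [integral_undef hi]; linarith
  have hmp := measurePreserving_prod_add (volume : Measure (Ed d)) (volume : Measure (Ed d))
  have hemb : MeasurableEmbedding (fun z : Ed d × Ed d => (z.1, z.1 + z.2)) :=
    (MeasurableEquiv.shearAddRight (Ed d)).measurableEmbedding
  have hcomp := (hmp.integrable_comp_emb hemb).2 hi
  have hint := hmp.integral_comp hemb (fun p : Ed d × Ed d =>
      (v p.1 - v p.2) * (f p.1 - f p.2) / ‖p.1 - p.2‖ ^ ((d : ℝ) + 2 * s))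
  rw [Measure.volume_eq_prod, ← hint]
  refine le_of_le_of_eq ?_ (integral_prod_symm _ hcomp).symm
  simp only [Function.comp_apply]
  have hinner : ∀ z : Ed d, ∫ x : Ed d, (v x - v (x + z)) * (f x - f (x + z)) /
      ‖x - (x + z)‖ ^ ((d : ℝ) + 2 * s) = ∫ x, v x * (fracKer d s z * secDiff f x z) := by
    intro z
    have : ∀ x : Ed d, (v x - v (x + z)) * (f x - f (x + z)) /
        ‖x - (x + z)‖ ^ ((d : ℝ) + 2 * s) =
        fracKer d s z * ((v x - v (x + z)) * (f x - f (x + z))) := by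
      intro x
      rw [sub_add_cancel_left, norm_neg, fracKer, Real.rpow_neg (norm_nonneg _), div_eq_inv_mul]
    simp_rw [this]
    rw [integral_const_mul, integral_mul_second_difference hv.aestronglyMeasurable hBv hfi,
      ← integral_const_mul]
    congr 1; ext x; ring
  simp only [hinner]
  have hprod : Integrable (fun p : Ed d × Ed d => v p.1 * (fracKer d s p.2 * secDiff f p.1 p.2))
      (volume.prod volume) :=
    (integrable_fracKer_mul_secDiff_prod hd hs0 hs1 hf hc).bdd_mul
      (hv.comp measurable_fst).aestronglyMeasurable (c := B)
      (Measure.quasiMeasurePreserving_fst.ae hBv)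
  rw [← integral_integral_swap (f := fun x z => v x * (fracKer d s z * secDiff f x z)) hprod]
  simp_rw [integral_const_mul]
  rw [← integral_neg]
  refine integral_mono hvw.neg ?_ fun x => ?_
  · exact (integrable_fracLap hd hs0 hs1 hf hc).bdd_mul hv.aestronglyMeasurable (c := B) hBv
  · have := mul_le_mul_of_nonneg_left (hfw x) (hv0 x)
    simpa [fracLap] using this

/-- A smooth concave function equal to the identity on `(-∞,1]` and constant on `[2,∞)`. -/
def concaveCut (σ : ℝ) : ℝ := ∫ w in (0 : ℝ)..σ, Real.smoothTransition (2 - w)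

theorem continuous_smoothTransition_two_sub :
    Continuous fun w : ℝ => Real.smoothTransition (2 - w) :=
  Real.smoothTransition.continuous.comp (by fun_prop)

theorem concaveCut_sub (a b : ℝ) :
    concaveCut b - concaveCut a = ∫ w in a..b, Real.smoothTransition (2 - w) :=
  intervalIntegral.integral_interval_sub_left
    (continuous_smoothTransition_two_sub.intervalIntegrable _ _)
    (continuous_smoothTransition_two_sub.intervalIntegrable _ _)

theorem hasDerivAt_concaveCut (σ : ℝ) :
    HasDerivAt concaveCut (Real.smoothTransition (2 - σ)) σ :=
  (continuous_smoothTransition_two_sub.integral_hasStrictDerivAt 0 σ).hasDerivAt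

theorem contDiff_concaveCut : ContDiff ℝ (⊤ : ℕ∞) concaveCut := by
  rw [contDiff_infty_iff_deriv]
  refine ⟨fun σ => (hasDerivAt_concaveCut σ).differentiableAt, ?_⟩
  rw [show deriv concaveCut = fun σ => Real.smoothTransition (2 - σ) from
    funext fun σ => (hasDerivAt_concaveCut σ).deriv]
  exact Real.smoothTransition.contDiff.comp (by fun_prop)

theorem concaveCut_mono : Monotone concaveCut :=
  monotone_of_deriv_nonneg (fun σ => (hasDerivAt_concaveCut σ).differentiableAt) fun σ => by
    rw [(hasDerivAt_concaveCut σ).deriv]; exact Real.smoothTransition.nonneg _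

theorem concaveCut_tangent (a b : ℝ) :
    concaveCut b ≤ concaveCut a + Real.smoothTransition (2 - a) * (b - a) := by
  rcases le_total a b with h | h
  · have h1 : ∫ w in a..b, Real.smoothTransition (2 - w) ≤
        ∫ _ in a..b, Real.smoothTransition (2 - a) :=
      intervalIntegral.integral_mono_on h
        (continuous_smoothTransition_two_sub.intervalIntegrable _ _)
        intervalIntegrable_const
        fun w hw => Real.smoothTransition.monotone (by linarith [hw.1])
    rw [← concaveCut_sub, intervalIntegral.integral_const, smul_eq_mul] at h1
    linarith
  · have h1 : ∫ _ in b..a, Real.smoothTransition (2 - a) ≤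
        ∫ w in b..a, Real.smoothTransition (2 - w) :=
      intervalIntegral.integral_mono_on h intervalIntegrable_const
        (continuous_smoothTransition_two_sub.intervalIntegrable _ _)
        fun w hw => Real.smoothTransition.monotone (by linarith [hw.2])
    rw [← concaveCut_sub, intervalIntegral.integral_const, smul_eq_mul] at h1
    linarith

theorem concaveCut_zero : concaveCut 0 = 0 := by simp [concaveCut]

theorem concaveCut_nonneg {σ : ℝ} (h : 0 ≤ σ) : 0 ≤ concaveCut σ :=
  concaveCut_zero ▸ concaveCut_mono h

theorem concaveCut_le {σ : ℝ} : concaveCut σ ≤ σ := by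
  have := concaveCut_tangent 0 σ
  rw [concaveCut_zero, Real.smoothTransition.one_of_one_le (by norm_num)] at this
  linarith

theorem concaveCut_of_le_one {σ : ℝ} (h : σ ≤ 1) : concaveCut σ = σ := by
  have := concaveCut_tangent σ 0
  rw [concaveCut_zero, Real.smoothTransition.one_of_one_le (by linarith)] at this
  linarith [concaveCut_le (σ := σ)]

theorem concaveCut_le_two (σ : ℝ) : concaveCut σ ≤ concaveCut 2 := by
  have := concaveCut_tangent 2 σ
  simpa using this

theorem concaveCut_of_two_le {σ : ℝ} (h : 2 ≤ σ) : concaveCut σ = concaveCut 2 :=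
  le_antisymm (concaveCut_le_two σ) (concaveCut_mono h)

/-- A smooth bounded truncation of the Riesz kernel, equal to it outside the unit ball. -/
def rieszTrunc (d : ℕ) (s : ℝ) (x : Ed d) : ℝ :=
  if x = 0 then concaveCut 2 else concaveCut (rieszKer d s x)

theorem rieszTrunc_nonneg (d : ℕ) (s : ℝ) (x : Ed d) : 0 ≤ rieszTrunc d s x := by
  unfold rieszTrunc
  split_ifs
  · exact concaveCut_nonneg (by norm_num)
  · exact concaveCut_nonneg (rieszKer_nonneg _ _ _)

theorem rieszTrunc_le (d : ℕ) (s : ℝ) (x : Ed d) : rieszTrunc d s x ≤ concaveCut 2 := by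
  unfold rieszTrunc
  split_ifs
  · exact le_rfl
  · exact concaveCut_le_two _

theorem abs_rieszTrunc_le (d : ℕ) (s : ℝ) (x : Ed d) : |rieszTrunc d s x| ≤ 2 := by
  rw [abs_of_nonneg (rieszTrunc_nonneg d s x)]
  exact (rieszTrunc_le d s x).trans concaveCut_le

theorem rieszTrunc_le_rieszKer {d : ℕ} {s : ℝ} {x : Ed d} (hx : x ≠ 0) :
    rieszTrunc d s x ≤ rieszKer d s x := by
  rw [rieszTrunc, if_neg hx]; exact concaveCut_le

theorem rieszTrunc_eq_rieszKer {d : ℕ} {s : ℝ} (hd : 2 * s < (d : ℝ)) {x : Ed d}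
    (hx : 1 ≤ ‖x‖) : rieszTrunc d s x = rieszKer d s x := by
  have hx0 : x ≠ 0 := norm_pos_iff.1 (by linarith)
  rw [rieszTrunc, if_neg hx0]
  exact concaveCut_of_le_one (Real.rpow_le_one_of_one_le_of_nonpos hx (by linarith))

theorem contDiff_rieszTrunc {d : ℕ} {s : ℝ} (hd : 2 * s < (d : ℝ)) :
    ContDiff ℝ (⊤ : ℕ∞) (rieszTrunc d s) := by
  rw [contDiff_iff_contDiffAt]
  intro x
  by_cases hx : x = 0
  · subst hx
    have h1 : Tendsto (fun x : Ed d => rieszKer d s x) (𝓝[≠] 0) atTop := by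
      have h2 := (tendsto_rpow_neg_nhdsGT_zero (y := 2 * s - (d : ℝ)) (by linarith)).comp
        (tendsto_norm_nhdsNE_zero (E := Ed d))
      exact h2
    have h2 : ∀ᶠ x in 𝓝 (0 : Ed d), x ≠ 0 → 2 ≤ rieszKer d s x :=
      eventually_nhdsWithin_iff.1 (h1.eventually_ge_atTop 2)
    have h3 : rieszTrunc d s =ᶠ[𝓝 0] fun _ => concaveCut 2 := by
      filter_upwards [h2] with x hx
      unfold rieszTrunc
      split_ifs with h
      · rfl
      · exact concaveCut_of_two_le (hx h)
    exact contDiffAt_const.congr_of_eventuallyEq h3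
  · have h3 : rieszTrunc d s =ᶠ[𝓝 x] fun x => concaveCut (rieszKer d s x) := by
      filter_upwards [isOpen_ne.mem_nhds hx] with y hy
      rw [rieszTrunc, if_neg hy]
    refine ContDiffAt.congr_of_eventuallyEq ?_ h3
    refine contDiff_concaveCut.contDiffAt.comp x ?_
    exact (contDiffAt_norm ℝ hx).rpow_const_of_ne (norm_ne_zero_iff.2 hx)

theorem contDiff_rieszDil {d : ℕ} {s r : ℝ} {f : Ed d → ℝ} (hf : ContDiff ℝ (⊤ : ℕ∞) f) :
    ContDiff ℝ (⊤ : ℕ∞) (rieszDil d s r f) :=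
  contDiff_const.mul (hf.comp (contDiff_const_smul _))

theorem rieszDil_rieszTrunc_eq {d : ℕ} {s r : ℝ} (hd : 2 * s < (d : ℝ)) (hr : 0 < r) {x : Ed d}
    (hx : r ≤ ‖x‖) : rieszDil d s r (rieszTrunc d s) x = rieszKer d s x := by
  rw [← congr_fun (rieszDil_rieszKer (d := d) (s := s) hr) x, rieszDil, rieszDil,
    rieszTrunc_eq_rieszKer hd]
  rw [norm_smul, norm_inv, Real.norm_of_nonneg hr.le, inv_mul_eq_div, le_div_iff₀ hr]
  linarith

theorem rieszDil_rieszTrunc_nonneg {d : ℕ} {s r : ℝ} (hr : 0 < r) (x : Ed d) :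
    0 ≤ rieszDil d s r (rieszTrunc d s) x :=
  mul_nonneg (by positivity) (rieszTrunc_nonneg _ _ _)

theorem rieszDil_rieszTrunc_le {d : ℕ} {s r : ℝ} (hr : 0 < r) (x : Ed d) :
    rieszDil d s r (rieszTrunc d s) x ≤ r ^ (2 * s - (d : ℝ)) * 2 :=
  mul_le_mul_of_nonneg_left ((le_abs_self _).trans (abs_rieszTrunc_le _ _ _)) (by positivity)

theorem rieszDil_rieszTrunc_le_rieszKer {d : ℕ} {s r : ℝ} (hr : 0 < r) {x : Ed d} (hx : x ≠ 0) :
    rieszDil d s r (rieszTrunc d s) x ≤ rieszKer d s x := by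
  rw [← congr_fun (rieszDil_rieszKer (d := d) (s := s) hr) x]
  exact mul_le_mul_of_nonneg_left (rieszTrunc_le_rieszKer (smul_ne_zero (inv_ne_zero hr.ne') hx))
    (by positivity)

/-- The difference of two dilated truncations: a smooth compactly supported test function. -/
def rieszTest (d : ℕ) (s r R : ℝ) (x : Ed d) : ℝ :=
  rieszDil d s r (rieszTrunc d s) x - rieszDil d s R (rieszTrunc d s) x

theorem contDiff_rieszTest {d : ℕ} {s : ℝ} (hd : 2 * s < (d : ℝ)) (r R : ℝ) :
    ContDiff ℝ (⊤ : ℕ∞) (rieszTest d s r R) :=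
  (contDiff_rieszDil (contDiff_rieszTrunc hd)).sub (contDiff_rieszDil (contDiff_rieszTrunc hd))

theorem hasCompactSupport_rieszTest {d : ℕ} {s r R : ℝ} (hd : 2 * s < (d : ℝ)) (hr : 0 < r)
    (hR : 0 < R) : HasCompactSupport (rieszTest d s r R) := by
  refine HasCompactSupport.intro (isCompact_closedBall (0 : Ed d) (max r R)) fun x hx => ?_
  have hx : max r R < ‖x‖ := by simpa using hx
  rw [rieszTest, rieszDil_rieszTrunc_eq hd hr ((le_max_left _ _).trans hx.le),
    rieszDil_rieszTrunc_eq hd hR ((le_max_right _ _).trans hx.le), sub_self]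

theorem rieszDil_one {d : ℕ} {s : ℝ} (f : Ed d → ℝ) : rieszDil d s 1 f = f := by
  funext x; simp [rieszDil]

theorem exists_abs_secDiff_rieszTrunc_le {d : ℕ} {s : ℝ} (hd : 2 * s < (d : ℝ)) :
    ∃ C : ℝ, ∀ x z, |secDiff (rieszTrunc d s) x z| ≤ C * ‖z‖ ^ 2 := by
  obtain ⟨C₀, hC₀⟩ := exists_abs_secDiff_le_sq (contDiff_rieszTest hd 1 2)
    (hasCompactSupport_rieszTest hd one_pos two_pos)
  set C := max C₀ 0
  have hC : ∀ x z, |secDiff (rieszTest d s 1 2) x z| ≤ C * ‖z‖ ^ 2 := fun x z =>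
    (hC₀ x z).trans (by gcongr; exact le_max_left _ _)
  have hC0 : 0 ≤ C := le_max_right _ _
  set q : ℝ := 2 ^ (2 * s - (d : ℝ))
  have hq0 : 0 ≤ q := by positivity
  have hq1 : q < 1 := Real.rpow_lt_one_of_one_lt_of_neg one_lt_two (by linarith)
  have hrec : ∀ x z, secDiff (rieszTrunc d s) x z = secDiff (rieszTest d s 1 2) x z +
      q * secDiff (rieszTrunc d s) ((2 : ℝ)⁻¹ • x) ((2 : ℝ)⁻¹ • z) := by
    intro x z
    rw [← secDiff_rieszDil]
    simp only [secDiff, rieszTest, rieszDil_one]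
    ring
  have hN : ∀ N : ℕ, ∀ x z, |secDiff (rieszTrunc d s) x z| ≤ 4 / 3 * C * ‖z‖ ^ 2 + 8 * q ^ N := by
    intro N
    induction N with
    | zero =>
      intro x z
      have := abs_secDiff_le_of_abs_le (abs_rieszTrunc_le d s) x z
      have : 0 ≤ 4 / 3 * C * ‖z‖ ^ 2 := by positivity
      simp only [pow_zero]; linarith
    | succ N ih =>
      intro x z
      have h1 := ih ((2 : ℝ)⁻¹ • x) ((2 : ℝ)⁻¹ • z)
      rw [norm_smul, norm_inv, Real.norm_of_nonneg (by norm_num : (0 : ℝ) ≤ 2)] at h1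
      rw [hrec]
      refine (abs_add_le _ _).trans ?_
      rw [abs_mul, abs_of_nonneg hq0]
      have h2 := mul_le_mul_of_nonneg_left h1 hq0
      have h3 : q * (C * ‖z‖ ^ 2) ≤ 1 * (C * ‖z‖ ^ 2) := by gcongr
      have h4 := hC x z
      calc _ ≤ C * ‖z‖ ^ 2 + q * (4 / 3 * C * (2⁻¹ * ‖z‖) ^ 2 + 8 * q ^ N) := add_le_add h4 h2
        _ = C * ‖z‖ ^ 2 + 1 / 3 * (q * (C * ‖z‖ ^ 2)) + 8 * q ^ (N + 1) := by ring
        _ ≤ _ := by linarith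
  refine ⟨4 / 3 * C, fun x z => ?_⟩
  have hlim : Tendsto (fun N : ℕ => 4 / 3 * C * ‖z‖ ^ 2 + 8 * q ^ N) atTop
      (𝓝 (4 / 3 * C * ‖z‖ ^ 2 + 8 * 0)) :=
    ((tendsto_pow_atTop_nhds_zero_of_lt_one hq0 hq1).const_mul 8).const_add _
  rw [mul_zero, add_zero] at hlim
  exact ge_of_tendsto' hlim fun N => hN N x z

theorem measurable_fracLap {d : ℕ} {s : ℝ} {f : Ed d → ℝ} (hf : Measurable f) :
    Measurable (fracLap d s f) := by
  have : StronglyMeasurable (fun p : Ed d × Ed d => fracKer d s p.2 * secDiff f p.1 p.2) := by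
    refine Measurable.stronglyMeasurable ?_
    refine ((measurable_fracKer d s).comp measurable_snd).mul ?_
    unfold secDiff; fun_prop
  exact this.integral_prod_right'.measurable

theorem integrable_fracKer_mul_secDiff_dil {d : ℕ} {s r : ℝ} (hd : 2 * s < (d : ℝ)) (hs0 : 0 < s)
    (hs1 : s < 1) (hr : 0 < r) (x : Ed d) :
    Integrable fun z => fracKer d s z * secDiff (rieszDil d s r (rieszTrunc d s)) x z := by
  have hd0 : 0 < d := by
    have : (0 : ℝ) < d := by linarith
    exact_mod_cast this
  obtain ⟨C, hC⟩ := exists_abs_secDiff_rieszTrunc_le hd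
  refine integrable_fracKer_mul_secDiff hd0 hs0 hs1
    (contDiff_rieszDil (contDiff_rieszTrunc hd)).continuous
    (A := r ^ (2 * s - (d : ℝ)) * 2) (C := r ^ (2 * s - (d : ℝ)) * (C * (r⁻¹) ^ 2)) ?_ ?_ x
  · intro x
    rw [abs_of_nonneg (rieszDil_rieszTrunc_nonneg hr x)]
    exact rieszDil_rieszTrunc_le hr x
  · intro x z
    rw [secDiff_rieszDil, abs_mul, abs_of_nonneg (by positivity), mul_assoc]
    refine mul_le_mul_of_nonneg_left ((hC _ _).trans_eq ?_) (by positivity)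
    rw [norm_smul, norm_inv, Real.norm_of_nonneg hr.le]; ring

theorem fracLap_rieszTest {d : ℕ} {s r R : ℝ} (hd : 2 * s < (d : ℝ)) (hs0 : 0 < s)
    (hs1 : s < 1) (hr : 0 < r) (hR : 0 < R) (x : Ed d) :
    fracLap d s (rieszTest d s r R) x = r ^ (-(d : ℝ)) * fracLap d s (rieszTrunc d s) (r⁻¹ • x) -
      R ^ (-(d : ℝ)) * fracLap d s (rieszTrunc d s) (R⁻¹ • x) := by
  rw [← fracLap_rieszDil hr, ← fracLap_rieszDil hR]
  unfold fracLap
  rw [← integral_sub (integrable_fracKer_mul_secDiff_dil hd hs0 hs1 hr x)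
    (integrable_fracKer_mul_secDiff_dil hd hs0 hs1 hR x)]
  congr 1; ext z
  simp only [secDiff, rieszTest]; ring

theorem integrable_rieszKer_sub_dil {d : ℕ} {s r : ℝ} (hd : 2 * s < (d : ℝ)) (hs0 : 0 < s)
    (hr : 0 < r) :
    Integrable fun x => rieszKer d s x - rieszDil d s r (rieszTrunc d s) x := by
  have hd0 : 0 < d := by
    have : (0 : ℝ) < d := by linarith
    exact_mod_cast this
  rw [← integrableOn_iff_integrable_of_support_subset (s := Metric.closedBall 0 r)]
  · exact (integrableOn_rieszKer hd0 hs0 r).sub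
      ((contDiff_rieszDil (contDiff_rieszTrunc hd)).continuous.continuousOn.integrableOn_compact
        (isCompact_closedBall _ _))
  · intro x hx
    by_contra h
    have h : r < ‖x‖ := by simpa using h
    exact hx (by simp [rieszDil_rieszTrunc_eq hd hr h.le])

theorem fracKer_mul_abs_le {d : ℕ} {s r : ℝ} (hd : 2 * s < (d : ℝ)) (hs0 : 0 < s) (hr : 0 < r)
    {x : Ed d} (hx : 2 * r ≤ ‖x‖) {y z : Ed d} (hyz : y = x + z ∨ y = x - z) :
    fracKer d s z * |rieszKer d s y - rieszDil d s r (rieszTrunc d s) y| ≤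
      (‖x‖ / 2) ^ (-((d : ℝ) + 2 * s)) *
        |rieszKer d s y - rieszDil d s r (rieszTrunc d s) y| := by
  rcases le_total r ‖y‖ with h | h
  · simp [rieszDil_rieszTrunc_eq hd hr h]
  · refine mul_le_mul_of_nonneg_right ?_ (abs_nonneg _)
    refine Real.rpow_le_rpow_of_nonpos (by linarith) ?_ (by linarith)
    have : ‖x‖ ≤ ‖y‖ + ‖z‖ := by
      rcases hyz with h | h
      · have := norm_sub_le y z
        rwa [h, add_sub_cancel_right, ← h] at this
      · have := norm_add_le y z
        rwa [h, sub_add_cancel, ← h] at this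
    linarith

theorem rieszKer_secDiff_estimate {d : ℕ} {s r : ℝ} (hd : 2 * s < (d : ℝ)) (hs0 : 0 < s)
    (hs1 : s < 1) (hr : 0 < r) {x : Ed d} (hx : 2 * r ≤ ‖x‖) :
    Integrable (fun z => fracKer d s z * secDiff (rieszKer d s) x z) ∧
    fracLap d s (rieszDil d s r (rieszTrunc d s)) x ≤ fracLap d s (rieszKer d s) x +
      2 * ((‖x‖ / 2) ^ (-((d : ℝ) + 2 * s)) *
        ∫ y, |rieszKer d s y - rieszDil d s r (rieszTrunc d s) y|) := by
  set T := rieszDil d s r (rieszTrunc d s) with hT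
  set P : Ed d → ℝ := fun y => rieszKer d s y - T y with hP
  set A := (‖x‖ / 2) ^ (-((d : ℝ) + 2 * s))
  have hPi : Integrable P := integrable_rieszKer_sub_dil hd hs0 hr
  have hTc : Continuous T := (contDiff_rieszDil (contDiff_rieszTrunc hd)).continuous
  have hPm : Measurable P := (measurable_rieszKer d s).sub hTc.measurable
  have hPp : Integrable fun z => P (x + z) := hPi.comp_add_left x
  have hPn : Integrable fun z => P (x - z) := hPi.comp_sub_left x
  have bp : ∀ z, ‖fracKer d s z * P (x + z)‖ ≤ A * |P (x + z)| := fun z => by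
    rw [norm_mul, Real.norm_of_nonneg (fracKer_nonneg d s z), Real.norm_eq_abs]
    exact fracKer_mul_abs_le hd hs0 hr hx (Or.inl rfl)
  have bn : ∀ z, ‖fracKer d s z * P (x - z)‖ ≤ A * |P (x - z)| := fun z => by
    rw [norm_mul, Real.norm_of_nonneg (fracKer_nonneg d s z), Real.norm_eq_abs]
    exact fracKer_mul_abs_le hd hs0 hr hx (Or.inr rfl)
  have ip : Integrable fun z => fracKer d s z * P (x + z) :=
    (hPp.abs.const_mul A).mono' ((measurable_fracKer d s).mul
      (hPm.comp (measurable_const.add measurable_id))).aestronglyMeasurable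
      (Eventually.of_forall bp)
  have im : Integrable fun z => fracKer d s z * P (x - z) :=
    (hPn.abs.const_mul A).mono' ((measurable_fracKer d s).mul
      (hPm.comp (measurable_const.sub measurable_id))).aestronglyMeasurable
      (Eventually.of_forall bn)
  have hPx : rieszKer d s x = T x := (rieszDil_rieszTrunc_eq hd hr (by linarith)).symm
  have hT1 := integrable_fracKer_mul_secDiff_dil hd hs0 hs1 hr x
  have hdec : (fun z => fracKer d s z * secDiff (rieszKer d s) x z) = fun z =>
      fracKer d s z * secDiff T x z - (fracKer d s z * P (x + z) + fracKer d s z * P (x - z)) := by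
    funext z
    simp only [secDiff, hP, hPx]; ring
  have hsum : Integrable fun z => fracKer d s z * P (x + z) + fracKer d s z * P (x - z) :=
    ip.add im
  refine ⟨hdec ▸ hT1.sub hsum, ?_⟩
  have h1 : fracLap d s (rieszKer d s) x = fracLap d s T x -
      ((∫ z, fracKer d s z * P (x + z)) + ∫ z, fracKer d s z * P (x - z)) := by
    unfold fracLap
    rw [hdec, integral_sub hT1 hsum, integral_add ip im]
  have h2 : ∫ z, fracKer d s z * P (x + z) ≤ A * ∫ y, |P y| := by
    have := norm_integral_le_of_norm_le (hPp.abs.const_mul A) (Eventually.of_forall bp)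
    rw [integral_const_mul, integral_add_left_eq_self (fun y => |P y|) x] at this
    exact (le_abs_self _).trans this
  have h3 : ∫ z, fracKer d s z * P (x - z) ≤ A * ∫ y, |P y| := by
    have := norm_integral_le_of_norm_le (hPn.abs.const_mul A) (Eventually.of_forall bn)
    rw [integral_const_mul, integral_sub_left_eq_self (fun y => |P y|) volume x] at this
    exact (le_abs_self _).trans this
  rw [h1]; linarith

theorem nat_pos_of_two_mul_lt {d : ℕ} {s : ℝ} (hd : 2 * s < (d : ℝ)) (hs0 : 0 < s) : 0 < d := by
  have : (0 : ℝ) < d := by linarith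
  exact_mod_cast this

theorem exists_fracLap_rieszTrunc_le_far {d : ℕ} {s : ℝ} (hd : 2 * s < (d : ℝ)) (hs0 : 0 < s)
    (hs1 : s < 1) {e : Ed d} (he : ‖e‖ = 1) :
    ∃ M : ℝ, 0 ≤ M ∧ ∀ x : Ed d, 2 ≤ ‖x‖ → fracLap d s (rieszTrunc d s) x ≤
      fracLap d s (rieszKer d s) e * ‖x‖ ^ (-(d : ℝ)) + M * ‖x‖ ^ (-((d : ℝ) + 2 * s)) := by
  refine ⟨2 * ((1 / 2) ^ (-((d : ℝ) + 2 * s)) *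
    ∫ y, |rieszKer d s y - rieszDil d s 1 (rieszTrunc d s) y|), ?_, fun x hx => ?_⟩
  · have : 0 ≤ ∫ y, |rieszKer d s y - rieszDil d s 1 (rieszTrunc d s) y| :=
      integral_nonneg fun _ => abs_nonneg _
    positivity
  · have h := (rieszKer_secDiff_estimate hd hs0 hs1 one_pos (x := x) (by linarith)).2
    have hx0 : x ≠ 0 := norm_pos_iff.1 (by linarith)
    rw [rieszDil_one, fracLap_rieszKer_eq hx0 he] at h
    rw [rieszDil_one]
    refine h.trans (le_of_eq ?_)
    rw [div_eq_mul_one_div, Real.mul_rpow (norm_nonneg _) (by norm_num)]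
    ring

theorem exists_abs_fracLap_rieszTrunc_le {d : ℕ} {s : ℝ} (hd : 2 * s < (d : ℝ)) (hs0 : 0 < s)
    (hs1 : s < 1) : ∃ M : ℝ, ∀ x, |fracLap d s (rieszTrunc d s) x| ≤ M := by
  obtain ⟨C, hC⟩ := exists_abs_secDiff_rieszTrunc_le hd
  exact exists_abs_fracLap_le (nat_pos_of_two_mul_lt hd hs0) hs0 hs1 (abs_rieszTrunc_le d s) hC

theorem setIntegral_fracLap_rieszTest {d : ℕ} {s : ℝ} (hd : 2 * s < (d : ℝ)) (hs0 : 0 < s)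
    (hs1 : s < 1) {R : ℝ} (hR : 0 < R) :
    ∫ x in Metric.closedBall 0 (2 * R), fracLap d s (rieszTest d s 1 2) x =
      ∫ x in Metric.closedBall 0 (2 * R) \ Metric.closedBall 0 R,
        fracLap d s (rieszTrunc d s) x := by
  obtain ⟨M, hM⟩ := exists_abs_fracLap_rieszTrunc_le hd hs0 hs1
  have hm : Measurable (fracLap d s (rieszTrunc d s)) :=
    measurable_fracLap (contDiff_rieszTrunc hd).continuous.measurable
  have hi : ∀ r : ℝ, IntegrableOn (fracLap d s (rieszTrunc d s)) (Metric.closedBall 0 r) :=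
    fun r => Measure.integrableOn_of_bounded (M := M) measure_closedBall_lt_top.ne
      hm.aestronglyMeasurable (ae_of_all _ hM)
  have hm2 : Measurable fun x : Ed d => fracLap d s (rieszTrunc d s) ((2 : ℝ)⁻¹ • x) :=
    hm.comp (measurable_const_smul _)
  have hi2 : IntegrableOn (fun x : Ed d => fracLap d s (rieszTrunc d s) ((2 : ℝ)⁻¹ • x))
      (Metric.closedBall 0 (2 * R)) :=
    Measure.integrableOn_of_bounded (M := M) measure_closedBall_lt_top.ne
      hm2.aestronglyMeasurable (ae_of_all _ fun x => hM _)
  have h1 := Measure.setIntegral_comp_smul_of_pos (volume : Measure (Ed d))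
    (fracLap d s (rieszTrunc d s)) (Metric.closedBall 0 (2 * R)) (inv_pos.2 two_pos)
  rw [_root_.smul_closedBall' (by norm_num), finrank_euclideanSpace_fin, smul_zero] at h1
  have h2 : ‖(2 : ℝ)⁻¹‖ * (2 * R) = R := by norm_num; ring
  rw [h2] at h1
  have h3 : ∫ x in Metric.closedBall 0 (2 * R), fracLap d s (rieszTest d s 1 2) x =
      (∫ x in Metric.closedBall 0 (2 * R), fracLap d s (rieszTrunc d s) x) -
        (2 : ℝ) ^ (-(d : ℝ)) *
        ∫ x in Metric.closedBall 0 (2 * R), fracLap d s (rieszTrunc d s) ((2 : ℝ)⁻¹ • x) := by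
    rw [← integral_const_mul, ← integral_sub (hi _) (hi2.const_mul _)]
    refine integral_congr_ae (ae_of_all _ fun x => ?_)
    simp [fracLap_rieszTest hd hs0 hs1 one_pos two_pos x]
  rw [h3, h1, setIntegral_sdiff Metric.isClosed_closedBall.measurableSet (hi _)
    (Metric.closedBall_subset_closedBall (by linarith)), smul_eq_mul, Real.rpow_neg two_pos.le,
    Real.rpow_natCast]
  simp

theorem fracLap_rieszKer_nonneg {d : ℕ} {s : ℝ} (hd : 2 * s < (d : ℝ)) (hs0 : 0 < s)
    (hs1 : s < 1) {e : Ed d} (he : ‖e‖ = 1) : 0 ≤ fracLap d s (rieszKer d s) e := by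
  by_contra! hc
  set c₀ := fracLap d s (rieszKer d s) e
  have hd0 := nat_pos_of_two_mul_lt hd hs0
  obtain ⟨M, hM0, hM⟩ := exists_fracLap_rieszTrunc_le_far hd hs0 hs1 he
  obtain ⟨A, hA⟩ := exists_abs_fracLap_rieszTrunc_le hd hs0 hs1
  have hm : Measurable (fracLap d s (rieszTrunc d s)) :=
    measurable_fracLap (contDiff_rieszTrunc hd).continuous.measurable
  have hlim : Tendsto (fun R : ℝ => M * R ^ (-(2 * s))) atTop (𝓝 (M * 0)) :=
    (tendsto_rpow_neg_atTop (by linarith)).const_mul M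
  rw [mul_zero] at hlim
  set v := (volume : Measure (Ed d)).real (Metric.closedBall 0 1)
  have hv : 0 < v := ENNReal.toReal_pos (Metric.measure_closedBall_pos _ _ one_pos).ne'
    measure_closedBall_lt_top.ne
  have htend : Tendsto (fun R : ℝ => ∫ x in Metric.closedBall 0 (2 * R),
      fracLap d s (rieszTest d s 1 2) x) atTop (𝓝 0) := by
    rw [← integral_fracLap_eq_zero hd0 hs0 hs1 (contDiff_rieszTest hd 1 2)
      (hasCompactSupport_rieszTest hd one_pos two_pos)]
    refine AECover.integral_tendsto_of_countably_generated
      (aecover_closedBall (tendsto_id.const_mul_atTop two_pos)) ?_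
    exact integrable_fracLap hd0 hs0 hs1 (contDiff_rieszTest hd 1 2)
      (hasCompactSupport_rieszTest hd one_pos two_pos)
  have hneg : c₀ / 4 * v < 0 := by nlinarith
  obtain ⟨R, hR2, hRM, hRi⟩ := ((eventually_ge_atTop (2 : ℝ)).and
    ((hlim.eventually (gt_mem_nhds (show 0 < -c₀ / 2 by linarith))).and
      (htend.eventually (lt_mem_nhds hneg)))).exists
  have hR0 : 0 < R := by linarith
  rw [setIntegral_fracLap_rieszTest hd hs0 hs1 hR0] at hRi
  have hvol : ∀ r : ℝ, 0 ≤ r →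
      (volume : Measure (Ed d)).real (Metric.closedBall 0 r) = r ^ d * v := fun r hr => by
    have := Measure.addHaar_real_closedBall' (volume : Measure (Ed d)) 0 hr
    rwa [finrank_euclideanSpace_fin] at this
  have hdiff : (volume : Measure (Ed d)).real (Metric.closedBall 0 (2 * R) \ Metric.closedBall 0 R)
      = (2 * R) ^ d * v - R ^ d * v := by
    rw [measureReal_sdiff (Metric.closedBall_subset_closedBall (by linarith))
      Metric.isClosed_closedBall.measurableSet measure_closedBall_lt_top.ne,
      hvol _ (by linarith), hvol _ hR0.le]
  have hle : ∫ x in Metric.closedBall 0 (2 * R) \ Metric.closedBall 0 R,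
      fracLap d s (rieszTrunc d s) x ≤
      ∫ x in (Metric.closedBall 0 (2 * R) \ Metric.closedBall 0 R : Set (Ed d)),
        c₀ / 2 * (2 * R) ^ (-(d : ℝ)) := by
    have hms : MeasurableSet (Metric.closedBall 0 (2 * R) \ Metric.closedBall 0 R : Set (Ed d)) :=
      Metric.isClosed_closedBall.measurableSet.diff Metric.isClosed_closedBall.measurableSet
    have hfin : volume (Metric.closedBall 0 (2 * R) \ Metric.closedBall 0 R : Set (Ed d)) ≠ ⊤ :=
      ((measure_mono sdiff_subset).trans_lt measure_closedBall_lt_top).ne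
    refine setIntegral_mono_on (Measure.integrableOn_of_bounded (M := A) hfin
      hm.aestronglyMeasurable (ae_of_all _ hA)) (integrableOn_const hfin) hms fun x hx => ?_
    have hx1 : ‖x‖ ≤ 2 * R := by simpa using hx.1
    have hx2 : R < ‖x‖ := by simpa using hx.2
    have hx0 : 0 < ‖x‖ := by linarith
    refine (hM x (by linarith)).trans ?_
    have h1 : ‖x‖ ^ (-((d : ℝ) + 2 * s)) = ‖x‖ ^ (-(d : ℝ)) * ‖x‖ ^ (-(2 * s)) := by
      rw [← Real.rpow_add hx0]; ring_nf
    have h2 : ‖x‖ ^ (-(2 * s)) ≤ R ^ (-(2 * s)) :=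
      Real.rpow_le_rpow_of_nonpos hR0 hx2.le (by linarith)
    have h3 : (2 * R) ^ (-(d : ℝ)) ≤ ‖x‖ ^ (-(d : ℝ)) :=
      Real.rpow_le_rpow_of_nonpos hx0 hx1 (by simp)
    have h4 : 0 ≤ ‖x‖ ^ (-(d : ℝ)) := by positivity
    have h5 : M * ‖x‖ ^ (-(2 * s)) ≤ -c₀ / 2 := (mul_le_mul_of_nonneg_left h2 hM0).trans hRM.le
    rw [h1]
    nlinarith
  rw [setIntegral_const, hdiff, Real.rpow_neg (by positivity), Real.rpow_natCast, smul_eq_mul]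
    at hle
  have h6 : R ^ d ≤ (2 * R) ^ d / 2 := by
    rw [mul_pow]
    have : (2 : ℝ) ^ 1 ≤ 2 ^ d := pow_le_pow_right₀ (by norm_num) hd0
    have h7 : 0 < R ^ d := by positivity
    nlinarith
  have h8 : 0 < (2 * R) ^ d := by positivity
  have h9 : ((2 * R) ^ d * v - R ^ d * v) * (c₀ / 2 * ((2 * R) ^ d)⁻¹) ≤ c₀ / 4 * v := by
    have h10 : (2 * R) ^ d * v / 2 ≤ (2 * R) ^ d * v - R ^ d * v := by nlinarith
    have h11 : c₀ / 2 * ((2 * R) ^ d)⁻¹ ≤ 0 :=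
      mul_nonpos_of_nonpos_of_nonneg (by linarith) (by positivity)
    refine (mul_le_mul_of_nonpos_right h10 h11).trans (le_of_eq ?_)
    field_simp
    ring
  linarith

theorem fracLap_rieszTrunc_nonneg {d : ℕ} {s : ℝ} (hd : 2 * s < (d : ℝ)) (hs0 : 0 < s)
    (hs1 : s < 1) (x : Ed d) : 0 ≤ fracLap d s (rieszTrunc d s) x := by
  have hd0 := nat_pos_of_two_mul_lt hd hs0
  have := nontrivial_Ed hd0
  by_cases hx : x = 0
  · refine integral_nonneg fun z => mul_nonneg (fracKer_nonneg _ _ _) ?_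
    have h0 : rieszTrunc d s x = concaveCut 2 := by simp [rieszTrunc, hx]
    have h1 := rieszTrunc_le d s (x + z)
    have h2 := rieszTrunc_le d s (x - z)
    simp only [secDiff, h0]
    linarith
  have hx0 : 0 < ‖x‖ := norm_pos_iff.2 hx
  set L := Real.smoothTransition (2 - rieszKer d s x)
  have hL : 0 ≤ L := Real.smoothTransition.nonneg _
  have hK := (rieszKer_secDiff_estimate hd hs0 hs1 (half_pos hx0) (x := x) (by linarith)).1
  have hT := integrable_fracKer_mul_secDiff_dil hd hs0 hs1 one_pos x
  rw [rieszDil_one] at hT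
  have h1 : L * fracLap d s (rieszKer d s) x ≤ fracLap d s (rieszTrunc d s) x := by
    rw [fracLap, ← integral_const_mul]
    refine integral_mono_ae (hK.const_mul L) hT ?_
    have hne : ∀ y : Ed d, ∀ᵐ z : Ed d, z ≠ y := fun y => by
      rw [ae_iff]; simp
    filter_upwards [hne x, hne (-x)] with z hz1 hz2
    have hz1' : x - z ≠ 0 := sub_ne_zero.2 hz1.symm
    have hz2' : x + z ≠ 0 := fun h => hz2 (eq_neg_of_add_eq_zero_right h)
    have e1 := concaveCut_tangent (rieszKer d s x) (rieszKer d s (x + z))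
    have e2 := concaveCut_tangent (rieszKer d s x) (rieszKer d s (x - z))
    have hfk := fracKer_nonneg d s z
    have : L * secDiff (rieszKer d s) x z ≤ secDiff (rieszTrunc d s) x z := by
      simp only [secDiff, rieszTrunc, hx, hz1', hz2', if_false]
      linarith
    calc L * (fracKer d s z * secDiff (rieszKer d s) x z)
        = fracKer d s z * (L * secDiff (rieszKer d s) x z) := by ring
      _ ≤ _ := mul_le_mul_of_nonneg_left this hfk
  obtain ⟨e, he⟩ := exists_norm_eq (Ed d) zero_le_one
  rw [fracLap_rieszKer_eq hx he] at h1
  have := fracLap_rieszKer_nonneg hd hs0 hs1 he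
  exact le_trans (by positivity) h1

theorem exists_fracLap_rieszTrunc_le_rpow {d : ℕ} {s γ : ℝ} (hd : 2 * s < (d : ℝ)) (hs0 : 0 < s)
    (hs1 : s < 1) (hγ0 : 0 ≤ γ) (hγd : γ ≤ d) :
    ∃ C : ℝ, 0 ≤ C ∧ ∀ x : Ed d, fracLap d s (rieszTrunc d s) x ≤ C * (1 + ‖x‖) ^ (-γ) := by
  have := nontrivial_Ed (nat_pos_of_two_mul_lt hd hs0)
  obtain ⟨e, he⟩ := exists_norm_eq (Ed d) zero_le_one
  obtain ⟨M, hM0, hM⟩ := exists_fracLap_rieszTrunc_le_far hd hs0 hs1 he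
  obtain ⟨A, hA⟩ := exists_abs_fracLap_rieszTrunc_le hd hs0 hs1
  have hc := fracLap_rieszKer_nonneg hd hs0 hs1 he
  set c₀ := fracLap d s (rieszKer d s) e
  have hA0 : 0 ≤ A := (abs_nonneg _).trans (hA 0)
  refine ⟨A * 3 ^ γ + (c₀ + M) * 2 ^ γ, by positivity, fun x => ?_⟩
  have hx1 : 0 < 1 + ‖x‖ := by positivity
  rw [add_mul]
  rcases le_total ‖x‖ 2 with hx | hx
  · have h1 : (3 : ℝ) ^ (-γ) ≤ (1 + ‖x‖) ^ (-γ) :=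
      Real.rpow_le_rpow_of_nonpos hx1 (by linarith) (by linarith)
    have h2 : (3 : ℝ) ^ γ * 3 ^ (-γ) = 1 := by
      rw [← Real.rpow_add (by norm_num)]; simp
    calc fracLap d s (rieszTrunc d s) x ≤ A := (le_abs_self _).trans (hA x)
      _ = A * 3 ^ γ * 3 ^ (-γ) := by rw [mul_assoc, h2, mul_one]
      _ ≤ A * 3 ^ γ * (1 + ‖x‖) ^ (-γ) := by gcongr
      _ ≤ _ := le_add_of_nonneg_right (by positivity)
  · have hx0 : 0 < ‖x‖ := by linarith
    have h1 : (2 * ‖x‖) ^ (-γ) ≤ (1 + ‖x‖) ^ (-γ) :=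
      Real.rpow_le_rpow_of_nonpos hx1 (by linarith) (by linarith)
    have h2 : ‖x‖ ^ (-γ) = 2 ^ γ * (2 * ‖x‖) ^ (-γ) := by
      rw [Real.mul_rpow two_pos.le hx0.le, ← mul_assoc, ← Real.rpow_add two_pos]; simp
    have h3 : ‖x‖ ^ (-(d : ℝ)) ≤ ‖x‖ ^ (-γ) :=
      Real.rpow_le_rpow_of_exponent_le (by linarith) (by linarith)
    have h4 : ‖x‖ ^ (-((d : ℝ) + 2 * s)) ≤ ‖x‖ ^ (-γ) :=
      Real.rpow_le_rpow_of_exponent_le (by linarith) (by linarith)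
    calc fracLap d s (rieszTrunc d s) x
        ≤ c₀ * ‖x‖ ^ (-(d : ℝ)) + M * ‖x‖ ^ (-((d : ℝ) + 2 * s)) := hM x hx
      _ ≤ c₀ * ‖x‖ ^ (-γ) + M * ‖x‖ ^ (-γ) := by gcongr
      _ = (c₀ + M) * 2 ^ γ * (2 * ‖x‖) ^ (-γ) := by rw [h2]; ring
      _ ≤ (c₀ + M) * 2 ^ γ * (1 + ‖x‖) ^ (-γ) := by gcongr
      _ ≤ _ := le_add_of_nonneg_left (by positivity)

theorem fracLap_comp_sub {d : ℕ} (s : ℝ) (f : Ed d → ℝ) (x₀ x : Ed d) :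
    fracLap d s (fun y => f (y - x₀)) x = fracLap d s f (x - x₀) := by
  simp only [fracLap, secDiff, add_sub_right_comm, sub_right_comm _ _ x₀]

theorem exists_fracLap_rieszTest_ge {d : ℕ} {s γ : ℝ} (hd : 2 * s < (d : ℝ)) (hs0 : 0 < s)
    (hs1 : s < 1) (hγ0 : 0 ≤ γ) (hγd : γ ≤ d) :
    ∃ C : ℝ, 0 ≤ C ∧ ∀ (x₀ : Ed d) (r R : ℝ), 0 < r → 1 + ‖x₀‖ ≤ R → ∀ x : Ed d,
      -(C * R ^ (γ - d) * (1 + ‖x‖) ^ (-γ)) ≤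
        fracLap d s (fun y => rieszTest d s r R (y - x₀)) x := by
  obtain ⟨C, hC0, hC⟩ := exists_fracLap_rieszTrunc_le_rpow hd hs0 hs1 hγ0 hγd
  refine ⟨C, hC0, fun x₀ r R hr hR x => ?_⟩
  have hR0 : 0 < R := by linarith [norm_nonneg x₀]
  rw [fracLap_comp_sub, fracLap_rieszTest hd hs0 hs1 hr hR0]
  have h1 := fracLap_rieszTrunc_nonneg hd hs0 hs1 (r⁻¹ • (x - x₀))
  have h2 : 0 ≤ r ^ (-(d : ℝ)) * fracLap d s (rieszTrunc d s) (r⁻¹ • (x - x₀)) := by positivity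
  have h3 : R ^ (-(d : ℝ)) * fracLap d s (rieszTrunc d s) (R⁻¹ • (x - x₀)) ≤
      C * R ^ (γ - d) * (1 + ‖x‖) ^ (-γ) := by
    have h4 : 1 + ‖R⁻¹ • (x - x₀)‖ = R⁻¹ * (R + ‖x - x₀‖) := by
      rw [norm_smul, Real.norm_of_nonneg (by positivity)]; field_simp
    have h5 : (1 + ‖R⁻¹ • (x - x₀)‖) ^ (-γ) ≤ R ^ γ * (1 + ‖x‖) ^ (-γ) := by
      rw [h4, Real.mul_rpow (by positivity) (by positivity), Real.inv_rpow hR0.le,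
        ← Real.rpow_neg hR0.le, neg_neg]
      refine mul_le_mul_of_nonneg_left (Real.rpow_le_rpow_of_nonpos (by positivity) ?_
        (by linarith)) (by positivity)
      have : ‖x‖ ≤ ‖x - x₀‖ + ‖x₀‖ := by simpa using norm_add_le (x - x₀) x₀
      linarith
    calc R ^ (-(d : ℝ)) * fracLap d s (rieszTrunc d s) (R⁻¹ • (x - x₀))
        ≤ R ^ (-(d : ℝ)) * (C * (R ^ γ * (1 + ‖x‖) ^ (-γ))) := by
          refine mul_le_mul_of_nonneg_left ((hC _).trans ?_) (by positivity)
          exact mul_le_mul_of_nonneg_left h5 hC0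
      _ = C * (R ^ γ * R ^ (-(d : ℝ))) * (1 + ‖x‖) ^ (-γ) := by ring
      _ = _ := by rw [← Real.rpow_add hR0, sub_eq_add_neg]
  linarith

theorem AdmissibleWeight.ae_ge {d : ℕ} {ρ : Ed d → ℝ} {γ₀ γ c C : ℝ}
    (hρ : AdmissibleWeight d ρ γ₀ γ c C) (hd0 : 0 < d) (hγ₀0 : 0 ≤ γ₀) (hγ0 : 0 ≤ γ) :
    ∀ᵐ x : Ed d, c * (1 + ‖x‖) ^ (-γ) ≤ ρ x := by
  have := nontrivial_Ed hd0
  obtain ⟨hc, -, -, -, h1, h2⟩ := hρ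
  have hne : ∀ᵐ z : Ed d, z ≠ 0 := by rw [ae_iff]; simp
  filter_upwards [h1, h2, hne] with x h1 h2 hx
  have hx0 : 0 < ‖x‖ := norm_pos_iff.2 hx
  rcases le_or_gt ‖x‖ 1 with h | h
  · have h3 : 1 ≤ ‖x‖ ^ (-γ₀) := Real.one_le_rpow_of_pos_of_le_one_of_nonpos hx0 h (by linarith)
    have h4 : (1 + ‖x‖) ^ (-γ) ≤ 1 := Real.rpow_le_one_of_one_le_of_nonpos (by linarith)
      (by linarith)
    exact (mul_le_mul_of_nonneg_left (h4.trans h3) hc.le).trans (h1 h).1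
  · exact (mul_le_mul_of_nonneg_left (Real.rpow_le_rpow_of_nonpos hx0 (by linarith)
      (by linarith)) hc.le).trans (h2 h).1

theorem WeakSolCore.ae_ae_le {d : ℕ} {s m κ : ℝ} {ρ : Ed d → ℝ} {u : Ed d → ℝ → ℝ}
    (hu : WeakSolCore d s m κ ρ u) {τ : ℝ} (hτ : 0 < τ) :
    ∃ B : ℝ, 0 ≤ B ∧ ∀ᵐ t : ℝ, τ < t → ∀ᵐ x : Ed d, u x t ≤ B := by
  obtain ⟨B, hB⟩ := hu.essBdd τ hτ
  refine ⟨max B 0, le_max_right _ _, ?_⟩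
  have hmeas : MeasurableSet {p : Ed d × ℝ | τ < p.2 → u p.1 p.2 ≤ max B 0} := by
    have h1 : MeasurableSet {p : Ed d × ℝ | τ < p.2} := measurableSet_lt (by fun_prop) (by fun_prop)
    have h2 : MeasurableSet {p : Ed d × ℝ | u p.1 p.2 ≤ max B 0} :=
      measurableSet_le hu.measurable (by fun_prop)
    exact h1.imp h2
  have h1 : ∀ᵐ p ∂((volume : Measure (Ed d)).prod (volume : Measure ℝ)),
      τ < p.2 → u p.1 p.2 ≤ max B 0 := by
    filter_upwards [hB] with p hp h using (hp h).trans (le_max_left _ _)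
  have h2 := (Measure.ae_ae_comm (p := fun (x : Ed d) (t : ℝ) => τ < t → u x t ≤ max B 0) hmeas).1
    (Measure.ae_ae_of_ae_prod h1)
  filter_upwards [h2] with t ht hτt
  filter_upwards [ht] with x hx using hx hτt

theorem WeakSolCore.measurable_slice {d : ℕ} {s m κ : ℝ} {ρ : Ed d → ℝ} {u : Ed d → ℝ → ℝ}
    (hu : WeakSolCore d s m κ ρ u) (t : ℝ) : Measurable fun x => u x t :=
  hu.measurable.comp (measurable_id.prodMk measurable_const)

/-- The energy of a weak solution against a truncated Riesz kernel is almost nonnegative. -/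
theorem WeakSolCore.exists_gagliardoE_rieszTest_ge {d : ℕ} {s m κ γ₀ γ c C : ℝ}
    {ρ : Ed d → ℝ} {u : Ed d → ℝ → ℝ}
    (hs0 : 0 < s) (hs1 : s < 1) (hd : 2 * s < (d : ℝ)) (hm : 1 < m) (hκ : 0 < κ)
    (hγ₀0 : 0 ≤ γ₀) (hγ0 : 0 ≤ γ) (hγd : γ ≤ d) (hρ : AdmissibleWeight d ρ γ₀ γ c C)
    (hu : WeakSolCore d s m κ ρ u) {τ : ℝ} (hτ : 0 < τ) :
    ∃ D : ℝ, 0 ≤ D ∧ ∀ᵐ t : ℝ, τ < t → ∀ (x₀ : Ed d) (r R : ℝ), 0 < r → 1 + ‖x₀‖ ≤ R →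
      -(D * R ^ (γ - d)) ≤
        gagliardoE d s κ (fun x => u x t ^ m) (fun x => rieszTest d s r R (x - x₀)) := by
  have hd0 := nat_pos_of_two_mul_lt hd hs0
  obtain ⟨A, hA0, hA⟩ := exists_fracLap_rieszTest_ge hd hs0 hs1 hγ0 hγd
  obtain ⟨B, hB0, hB⟩ := hu.ae_ae_le hτ
  obtain ⟨M, hM⟩ := hu.massBound
  have hc : 0 < c := hρ.1
  refine ⟨κ / 2 * (A * (B ^ (m - 1) / c) * max M 0), by positivity, ?_⟩
  filter_upwards [hB, (ae_restrict_iff' measurableSet_Ioi).1 hM] with t hBt hMt hτt x₀ r R hr hR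
  have hR0 : 0 < R := by linarith [norm_nonneg x₀]
  obtain ⟨hui, hule⟩ := hMt (hτ.trans hτt)
  set v : Ed d → ℝ := fun x => u x t ^ m
  set w : Ed d → ℝ := fun x => A * R ^ (γ - d) * (1 + ‖x‖) ^ (-γ)
  have hv : Measurable v := (hu.measurable_slice t).pow_const m
  have hv0 : ∀ x, 0 ≤ v x := fun x => Real.rpow_nonneg (hu.nonneg x t) _
  have hw0 : ∀ x, 0 ≤ w x := fun x => by positivity
  have hwm : Measurable w := by
    have : Measurable fun x : Ed d => (1 + ‖x‖) ^ (-γ) :=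
      (measurable_norm.const_add 1).pow_const _
    exact this.const_mul _
  have hle : ∀ᵐ x, v x * w x ≤ A * (B ^ (m - 1) / c) * R ^ (γ - d) * (u x t * ρ x) := by
    filter_upwards [hBt hτt, hρ.ae_ge hd0 hγ₀0 hγ0] with x hx hρx
    have hu0 := hu.nonneg x t
    have h1 : v x ≤ B ^ (m - 1) * u x t := by
      have : v x = u x t ^ (m - 1) * u x t := by
        rw [← Real.rpow_add_one' hu0 (by linarith)]
        simp [v]
      rw [this]
      exact mul_le_mul_of_nonneg_right (Real.rpow_le_rpow hu0 hx (by linarith)) hu0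
    have h2 : (1 + ‖x‖) ^ (-γ) ≤ ρ x / c := by
      rw [le_div_iff₀ hc]; linarith
    calc v x * w x ≤ (B ^ (m - 1) * u x t) * (A * R ^ (γ - d) * (ρ x / c)) := by
          refine mul_le_mul h1 ?_ (hw0 x) (by positivity)
          exact mul_le_mul_of_nonneg_left h2 (by positivity)
      _ = _ := by ring
  have hvw : Integrable fun x => v x * w x := by
    refine (hui.const_mul (A * (B ^ (m - 1) / c) * R ^ (γ - d))).mono'
      (hv.mul hwm).aestronglyMeasurable ?_
    filter_upwards [hle] with x hx
    rwa [Real.norm_of_nonneg (mul_nonneg (hv0 x) (hw0 x))]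
  have hint : ∫ x, v x * w x ≤ A * (B ^ (m - 1) / c) * R ^ (γ - d) * max M 0 := by
    refine (integral_mono_ae hvw (hui.const_mul _) hle).trans ?_
    rw [integral_const_mul]
    exact mul_le_mul_of_nonneg_left (hule.trans (le_max_left _ _)) (by positivity)
  have hf : ContDiff ℝ (⊤ : ℕ∞) fun x : Ed d => rieszTest d s r R (x - x₀) :=
    (contDiff_rieszTest hd r R).comp (contDiff_id.sub contDiff_const)
  have hfc : HasCompactSupport fun x : Ed d => rieszTest d s r R (x - x₀) :=
    (hasCompactSupport_rieszTest hd hr hR0).comp_homeomorph (Homeomorph.subRight x₀)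
  have key := gagliardoE_ge_of_fracLap_ge (B := B ^ m) hd0 hs0 hs1 hκ hv hv0
    (by filter_upwards [hBt hτt] with x hx
          using Real.rpow_le_rpow (hu.nonneg x t) hx (by linarith))
    hf hfc hw0 hvw (fun x => hA x₀ r R hr hR x)
  refine le_trans ?_ key
  have : κ / 2 * ∫ x, v x * w x ≤ κ / 2 * (A * (B ^ (m - 1) / c) * R ^ (γ - d) * max M 0) :=
    mul_le_mul_of_nonneg_left hint (by positivity)
  linarith

/-- The smooth primitive of a normalized bump function, rising from `0` to `1`. -/
def bumpStep (f : ContDiffBump (0 : ℝ)) (t : ℝ) : ℝ := ∫ w in (-f.rOut)..t, f.normed volume w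

theorem hasDerivAt_bumpStep (f : ContDiffBump (0 : ℝ)) (t : ℝ) :
    HasDerivAt (bumpStep f) (f.normed volume t) t :=
  (f.continuous_normed.integral_hasStrictDerivAt _ t).hasDerivAt

theorem contDiff_bumpStep (f : ContDiffBump (0 : ℝ)) : ContDiff ℝ (⊤ : ℕ∞) (bumpStep f) := by
  rw [contDiff_infty_iff_deriv]
  refine ⟨fun t => (hasDerivAt_bumpStep f t).differentiableAt, ?_⟩
  rw [show deriv (bumpStep f) = f.normed volume from
    funext fun t => (hasDerivAt_bumpStep f t).deriv]
  exact f.contDiff_normed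

theorem bumpStep_mono (f : ContDiffBump (0 : ℝ)) : Monotone (bumpStep f) :=
  monotone_of_deriv_nonneg (fun t => (hasDerivAt_bumpStep f t).differentiableAt) fun t => by
    rw [(hasDerivAt_bumpStep f t).deriv]; exact f.nonneg_normed t

theorem bumpStep_of_rOut_le {f : ContDiffBump (0 : ℝ)} {t : ℝ} (ht : f.rOut ≤ t) :
    bumpStep f t = 1 := by
  rw [bumpStep, intervalIntegral.integral_eq_integral_of_support_subset, f.integral_normed]
  rw [f.support_normed_eq, Real.ball_eq_Ioo]
  intro x hx
  exact ⟨by simpa using hx.1, by linarith [hx.2]⟩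

theorem bumpStep_of_le_neg_rOut {f : ContDiffBump (0 : ℝ)} {t : ℝ} (ht : t ≤ -f.rOut) :
    bumpStep f t = 0 := by
  have h1 : bumpStep f t = ∫ _ in (-f.rOut)..t, (0 : ℝ) := by
    refine intervalIntegral.integral_congr fun x hx => ?_
    rw [uIcc_of_ge ht] at hx
    have : x ∉ Function.support (f.normed volume) := by
      rw [f.support_normed_eq, Real.ball_eq_Ioo]
      intro h
      linarith [h.1, hx.2]
    simpa using this
  rw [h1]; simp

/-- An almost nonincreasing distribution is almost nonincreasing as a function. -/
theorem ae_le_add_of_forall_test {F : ℝ → ℝ} {ε τ : ℝ} (hF : LocallyIntegrable F) (hε : 0 ≤ ε)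
    (h : ∀ θ : ℝ → ℝ, ContDiff ℝ (⊤ : ℕ∞) θ → HasCompactSupport θ → tsupport θ ⊆ Ioi τ →
      (∀ t, 0 ≤ θ t) → -(ε * ∫ t, θ t) ≤ ∫ t, F t * deriv θ t) :
    ∀ᵐ p : ℝ × ℝ, τ < p.1 → p.1 ≤ p.2 → F p.2 ≤ F p.1 + ε * (p.2 - p.1) := by
  let φ : ℕ → ContDiffBump (0 : ℝ) := fun n =>
    ⟨1 / (n + 1) / 2, 1 / (n + 1), by positivity, half_lt_self (by positivity)⟩
  have hφ0 : Tendsto (fun n => (φ n).rOut) atTop (𝓝 0) := tendsto_one_div_add_atTop_nhds_zero_nat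
  have hconv := ContDiffBump.ae_convolution_tendsto_right_of_locallyIntegrable (μ := volume)
    (K := 2) hφ0 (Eventually.of_forall fun n => by simp [φ]; field_simp; norm_num) hF
  have hconv' : ∀ᵐ t, Tendsto (fun n => ∫ a, F a * (φ n).normed volume (a - t)) atTop
      (𝓝 (F t)) := by
    filter_upwards [hconv] with t ht
    refine ht.congr fun n => ?_
    rw [convolution_lsmul_swap]
    refine integral_congr_ae (ae_of_all _ fun a => ?_)
    simp only [smul_eq_mul]
    rw [← (φ n).normed_neg (a - t), neg_sub, mul_comm]
  have e1 := (Measure.quasiMeasurePreserving_fst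
    (μ := (volume : Measure ℝ)) (ν := (volume : Measure ℝ))).ae hconv'
  have e2 := (Measure.quasiMeasurePreserving_snd
    (μ := (volume : Measure ℝ)) (ν := (volume : Measure ℝ))).ae hconv'
  change ∀ᵐ p : ℝ × ℝ, _ at e1 e2
  filter_upwards [e1, e2] with ⟨t₁, t₂⟩ h1 h2 hτ ht
  simp only at h1 h2 hτ ht ⊢
  have hlim1 := h1.sub h2
  have hlim2 : Tendsto (fun n => -(ε * ((t₂ + (φ n).rOut) - (t₁ - (φ n).rOut)))) atTop
      (𝓝 (-(ε * ((t₂ + 0) - (t₁ - 0))))) :=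
    (((hφ0.const_add t₂).sub (hφ0.const_sub t₁)).const_mul ε).neg
  have hev : ∀ᶠ n in atTop, -(ε * ((t₂ + (φ n).rOut) - (t₁ - (φ n).rOut))) ≤
      (∫ a, F a * (φ n).normed volume (a - t₁)) - ∫ a, F a * (φ n).normed volume (a - t₂) := by
    filter_upwards [hφ0.eventually (gt_mem_nhds (sub_pos.2 hτ))] with n hn
    set δ := (φ n).rOut
    have hδ : 0 < δ := (φ n).rOut_pos
    set θ : ℝ → ℝ := fun t => bumpStep (φ n) (t - t₁) - bumpStep (φ n) (t - t₂) with hθ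
    have hθc : ContDiff ℝ (⊤ : ℕ∞) θ :=
      ((contDiff_bumpStep _).comp (contDiff_id.sub contDiff_const)).sub
        ((contDiff_bumpStep _).comp (contDiff_id.sub contDiff_const))
    have hθd : ∀ t, deriv θ t =
        (φ n).normed volume (t - t₁) - (φ n).normed volume (t - t₂) := fun t =>
      (((hasDerivAt_bumpStep (φ n) (t - t₁)).comp_sub_const t t₁).sub
        ((hasDerivAt_bumpStep (φ n) (t - t₂)).comp_sub_const t t₂)).deriv
    have hθ0 : ∀ t, 0 ≤ θ t := fun t => sub_nonneg.2 (bumpStep_mono _ (by linarith))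
    have hθ1 : ∀ t, θ t ≤ 1 := fun t => by
      have a1 : bumpStep (φ n) (t - t₁) ≤ 1 := by
        rw [← bumpStep_of_rOut_le (le_max_right (t - t₁) δ)]
        exact bumpStep_mono _ (le_max_left _ _)
      have a2 : 0 ≤ bumpStep (φ n) (t - t₂) := by
        rw [← bumpStep_of_le_neg_rOut (min_le_right (t - t₂) (-δ))]
        exact bumpStep_mono _ (min_le_left _ _)
      simp only [hθ]; linarith
    have hθs : Function.support θ ⊆ Icc (t₁ - δ) (t₂ + δ) := fun t ht' => by
      by_contra hcon
      apply ht'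
      rw [mem_Icc, not_and_or, not_le, not_le] at hcon
      rcases hcon with hcon | hcon
      · simp only [hθ]
        rw [bumpStep_of_le_neg_rOut (by linarith), bumpStep_of_le_neg_rOut (by linarith), sub_self]
      · simp only [hθ]
        rw [bumpStep_of_rOut_le (by linarith), bumpStep_of_rOut_le (by linarith), sub_self]
    have hθt : tsupport θ ⊆ Icc (t₁ - δ) (t₂ + δ) := closure_minimal hθs isClosed_Icc
    have hθk : HasCompactSupport θ := isCompact_Icc.of_isClosed_subset (isClosed_tsupport _) hθt
    have hint : ∫ t, θ t ≤ (t₂ + δ) - (t₁ - δ) := by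
      rw [← setIntegral_eq_integral_of_forall_compl_eq_zero (s := Icc (t₁ - δ) (t₂ + δ))
        fun t ht' => Function.notMem_support.1 fun h' => ht' (hθs h')]
      refine (setIntegral_mono_on (g := fun _ => (1 : ℝ)) hθc.continuous.integrableOn_Icc
        (integrableOn_const measure_Icc_lt_top.ne) measurableSet_Icc fun t _ => hθ1 t).trans ?_
      rw [setIntegral_const, Real.volume_real_Icc_of_le (by linarith)]
      simp
    have hFi : ∀ b, Integrable fun a => F a * (φ n).normed volume (a - b) := fun b => by
      have := hF.integrable_smul_right_of_hasCompactSupport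
        (g := fun a => (φ n).normed volume (a - b))
        ((φ n).continuous_normed.comp (continuous_id.sub continuous_const))
        ((φ n).hasCompactSupport_normed.comp_homeomorph (Homeomorph.subRight b))
      simpa only [smul_eq_mul] using this
    rw [← integral_sub (hFi t₁) (hFi t₂)]
    have := h θ hθc hθk (fun t ht' => by
      have := (hθt ht').1
      simp only [mem_Ioi]; linarith) hθ0
    simp only [hθd, mul_sub] at this
    refine le_trans ?_ this
    have := mul_le_mul_of_nonneg_left hint hε
    linarith
  have := le_of_tendsto_of_tendsto hlim2 hlim1 hev
  simp only [add_zero, sub_zero] at this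
  linarith

theorem isTestFn_mul {d : ℕ} {θ : ℝ → ℝ} {ψ : Ed d → ℝ} (hθ : ContDiff ℝ (⊤ : ℕ∞) θ)
    (hθc : HasCompactSupport θ) (hθs : tsupport θ ⊆ Ioi 0) (hψ : ContDiff ℝ (⊤ : ℕ∞) ψ)
    (hψc : HasCompactSupport ψ) : IsTestFn d fun p => θ p.2 * ψ p.1 := by
  refine ⟨(hθ.comp contDiff_snd).mul (hψ.comp contDiff_fst), ?_, ?_⟩
  · refine HasCompactSupport.intro (IsCompact.prod hψc hθc) fun p hp => ?_
    rw [mem_prod, not_and_or] at hp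
    rcases hp with hp | hp
    · rw [image_eq_zero_of_notMem_tsupport hp, mul_zero]
    · rw [image_eq_zero_of_notMem_tsupport hp, zero_mul]
  · have h1 : tsupport (fun p : Ed d × ℝ => θ p.2 * ψ p.1) ⊆ univ ×ˢ tsupport θ := by
      refine closure_minimal (fun p hp => ⟨mem_univ _, subset_tsupport _ ?_⟩)
        (isClosed_univ.prod (isClosed_tsupport _))
      exact left_ne_zero_of_mul hp
    exact h1.trans (prod_mono_right hθs)

theorem gagliardoE_const_mul {d : ℕ} (s κ a : ℝ) (v w : Ed d → ℝ) :
    gagliardoE d s κ v (fun x => a * w x) = a * gagliardoE d s κ v w := by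
  simp only [gagliardoE]
  rw [mul_left_comm, ← integral_const_mul a]
  congr 1
  refine integral_congr_ae (ae_of_all _ fun p => ?_)
  ring

theorem AdmissibleWeight.measurable {d : ℕ} {ρ : Ed d → ℝ} {γ₀ γ c C : ℝ}
    (hρ : AdmissibleWeight d ρ γ₀ γ c C) : Measurable ρ := hρ.2.2.1

theorem AdmissibleWeight.pos {d : ℕ} {ρ : Ed d → ℝ} {γ₀ γ c C : ℝ}
    (hρ : AdmissibleWeight d ρ γ₀ γ c C) (x : Ed d) : 0 < ρ x := hρ.2.2.2.1 x

/-- If the energy of a weak solution against `ψ` is almost nonnegative, then its weighted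
average against `ψ` is almost nonincreasing in time. -/
theorem WeakSolCore.ae_integral_le_add {d : ℕ} {s m κ : ℝ} {ρ : Ed d → ℝ} {u : Ed d → ℝ → ℝ}
    (hu : WeakSolCore d s m κ ρ u) (hρm : Measurable ρ) (hρ0 : ∀ x, 0 ≤ ρ x) {ψ : Ed d → ℝ}
    (hψ : ContDiff ℝ (⊤ : ℕ∞) ψ) (hψc : HasCompactSupport ψ) {τ ε : ℝ} (hτ : 0 < τ) (hε : 0 ≤ ε)
    (hE : ∀ᵐ t : ℝ, τ < t → -ε ≤ gagliardoE d s κ (fun x => u x t ^ m) ψ) :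
    ∀ᵐ p : ℝ × ℝ, τ < p.1 → p.1 ≤ p.2 →
      ∫ x, u x p.2 * ρ x * ψ x ≤ (∫ x, u x p.1 * ρ x * ψ x) + ε * (p.2 - p.1) := by
  obtain ⟨M, hM⟩ := hu.massBound
  rw [ae_restrict_iff' measurableSet_Ioi] at hM
  obtain ⟨A, hA⟩ := exists_abs_le_of_hasCompactSupport hψ.continuous hψc
  set F : ℝ → ℝ := fun t => ∫ x, u x t * ρ x * ψ x with hF
  have hFm : StronglyMeasurable F := by
    have : StronglyMeasurable fun p : ℝ × Ed d => u p.2 p.1 * ρ p.2 * ψ p.2 := by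
      refine Measurable.stronglyMeasurable ?_
      exact ((hu.measurable.comp measurable_swap).mul (hρm.comp measurable_snd)).mul
        (hψ.continuous.measurable.comp measurable_snd)
    exact this.integral_prod_right'
  have hFle : ∀ᵐ t : ℝ, ‖(Ioi 0).indicator F t‖ ≤ ‖|M| * |A|‖ := by
    filter_upwards [hM] with t ht
    by_cases h0 : t ∈ Ioi (0 : ℝ)
    · rw [indicator_of_mem h0]
      obtain ⟨hi, hle⟩ := ht h0
      have h1 : ∀ x, ‖u x t * ρ x * ψ x‖ ≤ u x t * ρ x * |A| := fun x => by
        have h2 : 0 ≤ u x t * ρ x := mul_nonneg (hu.nonneg x t) (hρ0 x)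
        rw [norm_mul, Real.norm_of_nonneg h2]
        exact mul_le_mul_of_nonneg_left ((hA x).trans (le_abs_self A)) h2
      refine (norm_integral_le_of_norm_le (hi.mul_const _) (ae_of_all _ h1)).trans ?_
      rw [integral_mul_const, Real.norm_of_nonneg (by positivity)]
      exact mul_le_mul_of_nonneg_right (hle.trans (le_abs_self M)) (abs_nonneg _)
    · rw [indicator_of_notMem h0, norm_zero]; exact norm_nonneg _
  have hloc : LocallyIntegrable ((Ioi 0).indicator F) :=
    (locallyIntegrable_const (|M| * |A|)).mono
      (hFm.indicator measurableSet_Ioi).aestronglyMeasurable hFle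
  have key := ae_le_add_of_forall_test (τ := τ) hloc hε fun θ hθ hθc hθs hθ0 => by
    have hθs0 : tsupport θ ⊆ Ioi 0 := hθs.trans (Ioi_subset_Ioi hτ.le)
    have hw := hu.weakForm _ (isTestFn_mul hθ hθc hθs0 hψ hψc)
    have h1 : ∫ t in Ioi (0 : ℝ), ∫ x : Ed d, u x t * deriv (fun τ => θ τ * ψ x) t * ρ x =
        ∫ t, (Ioi 0).indicator F t * deriv θ t := by
      rw [← integral_indicator measurableSet_Ioi]
      congr 1
      ext t
      by_cases h0 : t ∈ Ioi (0 : ℝ)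
      · rw [indicator_of_mem h0, indicator_of_mem h0, hF]
        simp only
        rw [← integral_mul_const]
        congr 1
        ext x
        rw [deriv_mul_const_field]
        ring
      · rw [indicator_of_notMem h0, indicator_of_notMem h0, zero_mul]
    simp only [gagliardoE_const_mul] at hw
    have h2 : -(ε * ∫ t, θ t) ≤
        ∫ t in Ioi (0 : ℝ), θ t * gagliardoE d s κ (fun x => u x t ^ m) ψ := by
      have hθi : Integrable θ := hθ.continuous.integrable_of_hasCompactSupport hθc
      have hθint : ∫ t in Ioi (0 : ℝ), θ t = ∫ t, θ t :=
        setIntegral_eq_integral_of_forall_compl_eq_zero fun t ht =>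
          image_eq_zero_of_notMem_tsupport fun h => ht (hθs0 h)
      by_cases hi : IntegrableOn
          (fun t => θ t * gagliardoE d s κ (fun x => u x t ^ m) ψ) (Ioi 0)
      · rw [← hθint, ← integral_const_mul, ← integral_neg]
        refine integral_mono_ae (hθi.integrableOn.const_mul ε).neg hi (ae_restrict_of_ae ?_)
        filter_upwards [hE] with t ht
        by_cases hτt : τ < t
        · have := mul_le_mul_of_nonneg_left (ht hτt) (hθ0 t)
          linarith
        · simp [image_eq_zero_of_notMem_tsupport fun h => hτt (hθs h)]
      · rw [integral_undef hi]
        have : 0 ≤ ∫ t, θ t := integral_nonneg hθ0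
        have := mul_nonneg hε this
        linarith
    have h3 : ∫ t in Ioi (0 : ℝ), ∫ x : Ed d, u x t * deriv (fun τ => θ τ * ψ x) t * ρ x =
      ∫ t in Ioi (0 : ℝ), θ t * gagliardoE d s κ (fun x => u x t ^ m) ψ := by linarith
    rw [← h1, h3]
    exact h2
  filter_upwards [key] with p hp h1 h2
  have := hp h1 h2
  rwa [indicator_of_mem (show p.2 ∈ Ioi 0 from hτ.trans (h1.trans_le h2)),
    indicator_of_mem (show p.1 ∈ Ioi 0 from hτ.trans h1)] at this

theorem ofReal_norm_rpow_eq {d : ℕ} (s : ℝ) {x₀ y : Ed d} (hy : y ≠ x₀) :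
    (ENNReal.ofReal ‖x₀ - y‖) ^ (2 * s - (d : ℝ)) = ENNReal.ofReal (rieszKer d s (y - x₀)) := by
  rw [ENNReal.ofReal_rpow_of_pos (norm_pos_iff.2 (sub_ne_zero.2 hy.symm)), norm_sub_rev, rieszKer]

/-- Comparison of Riesz potentials from asymptotic comparison against truncated kernels. -/
theorem lintegral_rieszKer_le_of_rieszTest {d : ℕ} {s : ℝ} (hd : 2 * s < (d : ℝ)) (hs0 : 0 < s)
    {f₁ f₂ : Ed d → ℝ} (h₁ : Integrable f₁) (h₂ : Integrable f₂) (hm₂ : Measurable f₂)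
    (h₁0 : ∀ y, 0 ≤ f₁ y) (h₂0 : ∀ y, 0 ≤ f₂ y) (x₀ : Ed d) {δ : ℕ → ℝ}
    (hδ : Tendsto δ atTop (𝓝 0))
    (h : ∀ᶠ j : ℕ in atTop, ∫ y, f₂ y * rieszTest d s (1 / (j + 1)) (j + 1) (y - x₀) ≤
      (∫ y, f₁ y * rieszTest d s (1 / (j + 1)) (j + 1) (y - x₀)) + δ j) :
    ∫⁻ y, (ENNReal.ofReal ‖x₀ - y‖) ^ (2 * s - (d : ℝ)) * ENNReal.ofReal (f₂ y) ≤
      ∫⁻ y, (ENNReal.ofReal ‖x₀ - y‖) ^ (2 * s - (d : ℝ)) * ENNReal.ofReal (f₁ y) := by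
  have := nontrivial_Ed (nat_pos_of_two_mul_lt hd hs0)
  have hne : ∀ᵐ y : Ed d, y ≠ x₀ := by rw [ae_iff]; simp
  set T := rieszTrunc d s
  have hT : ContDiff ℝ (⊤ : ℕ∞) T := contDiff_rieszTrunc hd
  set g : ℕ → Ed d → ℝ := fun j y => rieszDil d s (1 / (j + 1)) T (y - x₀) with hg
  set G : ℕ → Ed d → ℝ := fun j y => rieszDil d s (j + 1) T (y - x₀) with hG
  set q : ℕ → ℝ := fun j => ((j : ℝ) + 1) ^ (2 * s - (d : ℝ)) * 2 with hq
  have hj : ∀ j : ℕ, (0 : ℝ) < j + 1 := fun j => by positivity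
  have hj' : ∀ j : ℕ, (0 : ℝ) < 1 / (j + 1) := fun j => by positivity
  have hg0 : ∀ j y, 0 ≤ g j y := fun j y => rieszDil_rieszTrunc_nonneg (hj' j) _
  have hG0 : ∀ j y, 0 ≤ G j y := fun j y => rieszDil_rieszTrunc_nonneg (hj j) _
  have hGq : ∀ j y, G j y ≤ q j := fun j y => rieszDil_rieszTrunc_le (hj j) _
  have hgm : ∀ j, Measurable (g j) := fun j =>
    (contDiff_rieszDil hT).continuous.measurable.comp (measurable_id.sub_const x₀)
  have hGm : ∀ j, Measurable (G j) := fun j =>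
    (contDiff_rieszDil hT).continuous.measurable.comp (measurable_id.sub_const x₀)
  have hgi : ∀ j {f : Ed d → ℝ}, Integrable f → Integrable fun y => f y * g j y := fun j f hf =>
    hf.mul_bdd (c := (1 / ((j : ℝ) + 1)) ^ (2 * s - (d : ℝ)) * 2) (hgm j).aestronglyMeasurable
      (ae_of_all _ fun y => by
        rw [Real.norm_of_nonneg (hg0 j y)]; exact rieszDil_rieszTrunc_le (hj' j) _)
  have hGi : ∀ j {f : Ed d → ℝ}, Integrable f → Integrable fun y => f y * G j y := fun j f hf =>
    hf.mul_bdd (c := q j) (hGm j).aestronglyMeasurable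
      (ae_of_all _ fun y => by rw [Real.norm_of_nonneg (hG0 j y)]; exact hGq j y)
  have hψ : ∀ (j : ℕ) {f : Ed d → ℝ}, Integrable f →
      ∫ y, f y * rieszTest d s (1 / (j + 1)) (j + 1) (y - x₀) =
        (∫ y, f y * g j y) - ∫ y, f y * G j y := fun j f hf => by
    rw [← integral_sub (hgi j hf) (hGi j hf)]
    refine integral_congr_ae (ae_of_all _ fun y => ?_)
    simp only [hg, hG, rieszTest, T]; ring
  have hof : ∀ j {f : Ed d → ℝ}, Integrable f → (∀ y, 0 ≤ f y) →
      ∫⁻ y, ENNReal.ofReal (f y * g j y) = ENNReal.ofReal (∫ y, f y * g j y) := fun j f hf hf0 =>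
    (ofReal_integral_eq_lintegral_ofReal (hgi j hf)
      (ae_of_all _ fun y => mul_nonneg (hf0 y) (hg0 j y))).symm
  set I₁ := ∫⁻ y, (ENNReal.ofReal ‖x₀ - y‖) ^ (2 * s - (d : ℝ)) * ENNReal.ofReal (f₁ y)
  have hI₁ : ∀ j, ENNReal.ofReal (∫ y, f₁ y * g j y) ≤ I₁ := fun j => by
    rw [← hof j h₁ h₁0]
    refine lintegral_mono_ae ?_
    filter_upwards [hne] with y hy
    rw [ofReal_norm_rpow_eq s hy, mul_comm, ENNReal.ofReal_mul (hg0 j y)]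
    gcongr
    exact rieszDil_rieszTrunc_le_rieszKer (hj' j) (sub_ne_zero.2 hy)
  have hup : ∀ᶠ j : ℕ in atTop, ∫⁻ y, ENNReal.ofReal (f₂ y * g j y) ≤
      I₁ + ENNReal.ofReal (δ j + (∫ y, f₂ y) * q j) := by
    filter_upwards [h] with j hle
    rw [hψ j h₁, hψ j h₂] at hle
    have a1 : ∫ y, f₂ y * G j y ≤ (∫ y, f₂ y) * q j := by
      rw [← integral_mul_const]
      exact integral_mono (hGi j h₂) (h₂.mul_const _) fun y =>
        mul_le_mul_of_nonneg_left (hGq j y) (h₂0 y)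
    have a2 : 0 ≤ ∫ y, f₁ y * G j y := integral_nonneg fun y => mul_nonneg (h₁0 y) (hG0 j y)
    rw [hof j h₂ h₂0]
    refine le_trans (ENNReal.ofReal_le_ofReal
      (q := (∫ y, f₁ y * g j y) + (δ j + (∫ y, f₂ y) * q j)) (by linarith)) ?_
    exact ENNReal.ofReal_add_le.trans (add_le_add_left (hI₁ j) _)
  have hq0 : Tendsto q atTop (𝓝 0) := by
    have h1 := (tendsto_rpow_neg_atTop (y := (d : ℝ) - 2 * s) (by linarith)).comp
      (tendsto_atTop_add_const_right atTop (1 : ℝ) tendsto_natCast_atTop_atTop)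
    have h2 := h1.mul_const 2
    simpa only [zero_mul, neg_sub, Function.comp_def] using h2
  have hlim : Tendsto (fun j => I₁ + ENNReal.ofReal (δ j + (∫ y, f₂ y) * q j)) atTop (𝓝 I₁) := by
    have h1 : Tendsto (fun j => δ j + (∫ y, f₂ y) * q j) atTop (𝓝 0) := by
      simpa using hδ.add (hq0.const_mul (∫ y, f₂ y))
    simpa using (ENNReal.tendsto_ofReal h1).const_add I₁
  calc ∫⁻ y, (ENNReal.ofReal ‖x₀ - y‖) ^ (2 * s - (d : ℝ)) * ENNReal.ofReal (f₂ y)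
      ≤ ∫⁻ y, liminf (fun j => ENNReal.ofReal (f₂ y * g j y)) atTop := by
        refine lintegral_mono_ae ?_
        filter_upwards [hne] with y hy
        have hpos : 0 < ‖y - x₀‖ := norm_pos_iff.2 (sub_ne_zero.2 hy)
        have hev : ∀ᶠ j : ℕ in atTop, ENNReal.ofReal (f₂ y * g j y) =
            ENNReal.ofReal (rieszKer d s (y - x₀)) * ENNReal.ofReal (f₂ y) := by
          filter_upwards [tendsto_one_div_add_atTop_nhds_zero_nat.eventually
            (gt_mem_nhds hpos)] with j hjy
          rw [hg]
          simp only
          rw [rieszDil_rieszTrunc_eq hd (hj' j) hjy.le, mul_comm,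
            ENNReal.ofReal_mul (rieszKer_nonneg _ _ _)]
        rw [liminf_congr hev, liminf_const, ofReal_norm_rpow_eq s hy]
    _ ≤ liminf (fun j => ∫⁻ y, ENNReal.ofReal (f₂ y * g j y)) atTop :=
        lintegral_liminf_le fun j => (hm₂.mul (hgm j)).ennreal_ofReal
    _ ≤ liminf (fun j => I₁ + ENNReal.ofReal (δ j + (∫ y, f₂ y) * q j)) atTop :=
        liminf_le_liminf hup
    _ = I₁ := hlim.liminf_eq

theorem WeakSolCore.measurable_rieszPotU {d : ℕ} {s m κ : ℝ} {ρ : Ed d → ℝ} {u : Ed d → ℝ → ℝ}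
    (hu : WeakSolCore d s m κ ρ u) (hρm : Measurable ρ) (k : ℝ) :
    Measurable fun p : Ed d × ℝ => rieszPotU d s k ρ u p.1 p.2 := by
  have h : Measurable fun q : (Ed d × ℝ) × Ed d =>
      (ENNReal.ofReal ‖q.1.1 - q.2‖) ^ (2 * s - (d : ℝ)) *
        ENNReal.ofReal (u q.2 q.1.2 * ρ q.2) := by
    have h1 : Measurable fun q : (Ed d × ℝ) × Ed d => u q.2 q.1.2 :=
      hu.measurable.comp (by fun_prop : Measurable fun q : (Ed d × ℝ) × Ed d => (q.2, q.1.2))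
    have h2 : Measurable fun q : (Ed d × ℝ) × Ed d => ρ q.2 := hρm.comp measurable_snd
    have h3 : Measurable fun q : (Ed d × ℝ) × Ed d => ENNReal.ofReal ‖q.1.1 - q.2‖ := by fun_prop
    exact (h3.pow_const _).mul (h1.mul h2).ennreal_ofReal
  exact h.lintegral_prod_right'.const_mul _

theorem WeakSolCore.ae_rieszPotU_le {d : ℕ} {s m κ γ₀ γ c C : ℝ} {ρ : Ed d → ℝ}
    {u : Ed d → ℝ → ℝ} (hs0 : 0 < s) (hs1 : s < 1) (hd : 2 * s < (d : ℝ)) (hm : 1 < m)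
    (hκ : 0 < κ) (hγ₀0 : 0 ≤ γ₀) (hγ0 : 0 ≤ γ) (hγd : γ < d)
    (hρ : AdmissibleWeight d ρ γ₀ γ c C) (hu : WeakSolCore d s m κ ρ u) (k : ℝ) (x₀ : Ed d) :
    ∀ᵐ p : ℝ × ℝ, 0 < p.1 → p.1 ≤ p.2 →
      rieszPotU d s k ρ u x₀ p.2 ≤ rieszPotU d s k ρ u x₀ p.1 := by
  have hτ : ∀ n : ℕ, (0 : ℝ) < 1 / (n + 1) := fun n => by positivity
  choose D hD0 hD using fun n : ℕ =>
    hu.exists_gagliardoE_rieszTest_ge hs0 hs1 hd hm hκ hγ₀0 hγ0 hγd.le hρ (hτ n)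
  have hmono : ∀ᵐ p : ℝ × ℝ, ∀ n j : ℕ, 1 + ‖x₀‖ ≤ (j : ℝ) + 1 → 1 / ((n : ℝ) + 1) < p.1 →
      p.1 ≤ p.2 →
      ∫ y, u y p.2 * ρ y * rieszTest d s (1 / (j + 1)) (j + 1) (y - x₀) ≤
        (∫ y, u y p.1 * ρ y * rieszTest d s (1 / (j + 1)) (j + 1) (y - x₀)) +
          D n * ((j : ℝ) + 1) ^ (γ - d) * (p.2 - p.1) := by
    refine ae_all_iff.2 fun n => ae_all_iff.2 fun j => ?_
    by_cases hj : 1 + ‖x₀‖ ≤ (j : ℝ) + 1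
    · have hj0 : (0 : ℝ) < j + 1 := by positivity
      have := hu.ae_integral_le_add hρ.measurable (fun x => (hρ.pos x).le)
        (ψ := fun y => rieszTest d s (1 / (j + 1)) (j + 1) (y - x₀))
        ((contDiff_rieszTest hd _ _).comp (contDiff_id.sub contDiff_const))
        ((hasCompactSupport_rieszTest hd (hτ j) hj0).comp_homeomorph (Homeomorph.subRight x₀))
        (hτ n) (ε := D n * ((j : ℝ) + 1) ^ (γ - d)) (mul_nonneg (hD0 n) (by positivity))
        (by filter_upwards [hD n] with t ht hnt using ht hnt x₀ _ _ (hτ j) hj)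
      filter_upwards [this] with p hp _ using hp
    · exact ae_of_all _ fun p h => absurd h hj
  obtain ⟨M, hM⟩ := hu.massBound
  rw [ae_restrict_iff' measurableSet_Ioi] at hM
  have e1 := (Measure.quasiMeasurePreserving_fst
    (μ := (volume : Measure ℝ)) (ν := (volume : Measure ℝ))).ae hM
  have e2 := (Measure.quasiMeasurePreserving_snd
    (μ := (volume : Measure ℝ)) (ν := (volume : Measure ℝ))).ae hM
  change ∀ᵐ p : ℝ × ℝ, _ at e1 e2
  filter_upwards [hmono, e1, e2] with p hp hp1 hp2 h0 hle
  obtain ⟨n, hn⟩ := exists_nat_one_div_lt h0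
  refine mul_le_mul_right ?_ _
  refine lintegral_rieszKer_le_of_rieszTest hd hs0 (hp1 h0).1 (hp2 (h0.trans_le hle)).1
    ((hu.measurable_slice _).mul hρ.measurable)
    (fun y => mul_nonneg (hu.nonneg _ _) (hρ.pos y).le)
    (fun y => mul_nonneg (hu.nonneg _ _) (hρ.pos y).le) x₀
    (δ := fun j => D n * ((j : ℝ) + 1) ^ (γ - d) * (p.2 - p.1)) ?_ ?_
  · have h1 := (tendsto_rpow_neg_atTop (y := (d : ℝ) - γ) (by linarith)).comp
      (tendsto_atTop_add_const_right atTop (1 : ℝ) tendsto_natCast_atTop_atTop)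
    have h2 := (h1.const_mul (D n)).mul_const (p.2 - p.1)
    simpa only [zero_mul, mul_zero, neg_sub, Function.comp_def] using h2
  · filter_upwards [tendsto_natCast_atTop_atTop.eventually (eventually_ge_atTop ‖x₀‖)] with j hj
    exact hp n j (by linarith) hn hle

/-- **Monotonicity in time of the potential.** If `u` is a weak solution of
the Cauchy problem with initial datum `μ`, then the Riesz potential
`U(·,t)` of `ρ(·)u(·,t)` is essentially nonincreasing in time: for a.e. pair
`(t₁,t₂)` with `0 < t₁ ≤ t₂`, `U(x,t₂) ≤ U(x,t₁)` for a.e. `x`. -/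
theorem potential_monotone_in_time
    (d : ℕ) (s m κ k γ₀ γ c C : ℝ)
    (hs0 : 0 < s) (hs1 : s < 1) (hd : 2 * s < (d : ℝ)) (hm : 1 < m)
    (hκ : 0 < κ) (hk : 0 < k)
    (hγ₀0 : 0 ≤ γ₀) (hγ₀γ : γ₀ ≤ γ) (hγs : γ < 2 * s) (hγd : γ ≤ (d : ℝ) - 2 * s)
    (ρ : Ed d → ℝ) (hρ : AdmissibleWeight d ρ γ₀ γ c C)
    (μ : Measure (Ed d)) (hμ : IsFiniteMeasure μ)
    (u : Ed d → ℝ → ℝ) (hu : IsWeakSolution d s m κ ρ μ u) :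
    ∀ᵐ p ∂(volume : Measure (ℝ × ℝ)), 0 < p.1 → p.1 ≤ p.2 →
      ∀ᵐ x ∂(volume : Measure (Ed d)),
        rieszPotU d s k ρ u x p.2 ≤ rieszPotU d s k ρ u x p.1 := by
  have hpot := hu.1.measurable_rieszPotU hρ.measurable k
  have hset : MeasurableSet {q : (ℝ × ℝ) × Ed d | 0 < q.1.1 → q.1.1 ≤ q.1.2 →
      rieszPotU d s k ρ u q.2 q.1.2 ≤ rieszPotU d s k ρ u q.2 q.1.1} := by
    have h1 : MeasurableSet {q : (ℝ × ℝ) × Ed d | 0 < q.1.1} :=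
      measurableSet_lt (by fun_prop) (by fun_prop)
    have h2 : MeasurableSet {q : (ℝ × ℝ) × Ed d | q.1.1 ≤ q.1.2} :=
      measurableSet_le (by fun_prop) (by fun_prop)
    have hπ₁ : Measurable fun q : (ℝ × ℝ) × Ed d => (q.2, q.1.1) := by fun_prop
    have hπ₂ : Measurable fun q : (ℝ × ℝ) × Ed d => (q.2, q.1.2) := by fun_prop
    have h3 := measurableSet_le (hpot.comp hπ₂) (hpot.comp hπ₁)
    exact h1.imp (h2.imp h3)
  have hae : ∀ᵐ x : Ed d, ∀ᵐ p : ℝ × ℝ, 0 < p.1 → p.1 ≤ p.2 →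
      rieszPotU d s k ρ u x p.2 ≤ rieszPotU d s k ρ u x p.1 :=
    ae_of_all _ fun x => hu.1.ae_rieszPotU_le hs0 hs1 hd hm hκ hγ₀0 (hγ₀0.trans hγ₀γ)
      (by linarith) hρ k x
  rw [← Measure.ae_ae_comm hset] at hae
  filter_upwards [hae] with p hp h1 h2
  filter_upwards [hp] with x hx using hx h1 h2
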